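/- For every real x with −1/5 < x < 1/5: (1/8)·∑_{n=0}^∞ (−1)^n · 2^{−2(n+x)} · (1/2)_{n+x} (1/4)_{n+x} (3/4)_{n+x} / (1)_{n+x}³ · (20(n+x)+3) = (1/π)·(cos 2πx)/(cos πx) + 4^{−x} · (1/2)_x (1/4)_x (3/4)_x / (1)_x³ · (32x³/(1−2x)) · ∑_{n=0}^∞ (−1)^n · (1/2+2x)_n (1/2+x)_n² / [ (3/2−x)_n (1/2)_n² ] · (2n+1+x)/(2n+1)², where both series converge. -/

import Mathlib

/-- The Pochhammer symbol for real index: `(a)_t = Γ(a+t)/Γ(a)`. -/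
noncomputable def pochG (a t : ℝ) : ℝ := Real.Gamma (a + t) / Real.Gamma a

/-- The Pochhammer symbol (rising factorial) `(a)_n = a (a+1) ⋯ (a+n-1)` for real `a`. -/
def pochR (a : ℝ) (n : ℕ) : ℝ := ∏ j ∈ Finset.range n, (a + j)

open Filter Topology MeasureTheory

theorem tendsto_Gamma_div_factorial_of_pos {a : ℝ} (ha : 0 < a) :
    Tendsto (fun n : ℕ => Real.Gamma (n + (a + 1)) / ((n : ℝ) ^ a * (n.factorial : ℝ))) atTop (𝓝 1) := by
  have hG := (Real.Gamma_pos_of_pos ha).ne'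
  have h := ((Real.GammaSeq_tendsto_Gamma a).inv₀ hG).const_mul (Real.Gamma a)
  rw [mul_inv_cancel₀ hG] at h
  refine h.congr' ?_
  filter_upwards [eventually_gt_atTop 0] with n hn
  have hprod : ∀ m : ℕ, Real.Gamma (m + a) = Real.Gamma a * ∏ j ∈ Finset.range m, (a + j) := by
    intro m
    induction m with
    | zero => simp
    | succ m ih =>
      rw [Finset.prod_range_succ, ← mul_assoc, ← ih]
      have : ((m + 1 : ℕ) : ℝ) + a = (m + a) + 1 := by push_cast; ring
      rw [this, Real.Gamma_add_one (by positivity)]; ring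
  have h2 := hprod (n + 1)
  have h3 : ((n + 1 : ℕ) : ℝ) + a = n + (a + 1) := by push_cast; ring
  rw [h3] at h2
  rw [h2, Real.GammaSeq, inv_div, mul_div_assoc]

/-- `Γ(n + a) / (n ^ (a - 1) * n!) → 1`. -/
theorem tendsto_Gamma_div_factorial (a : ℝ) :
    Tendsto (fun n : ℕ => Real.Gamma (n + a) / ((n : ℝ) ^ (a - 1) * (n.factorial : ℝ)))
      atTop (𝓝 1) := by
  have key : ∀ m : ℕ, ∀ a : ℝ, 1 < a + m →
      Tendsto (fun n : ℕ => Real.Gamma (n + a) / ((n : ℝ) ^ (a - 1) * (n.factorial : ℝ)))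
      atTop (𝓝 1) := by
    intro m
    induction m with
    | zero =>
      intro a ha
      have := tendsto_Gamma_div_factorial_of_pos (a := a - 1) (by simpa using ha)
      simpa using this
    | succ m ih =>
      intro a ha
      have h1 := ih (a + 1) (by push_cast at ha; linarith)
      have h2 : Tendsto (fun n : ℕ => (n : ℝ) / (n + a)) atTop (𝓝 1) :=
        tendsto_natCast_div_add_atTop a
      have h3 := h1.mul h2
      rw [mul_one] at h3
      refine h3.congr' ?_
      filter_upwards [eventually_gt_atTop 0, tendsto_natCast_atTop_atTop.eventually_gt_atTop (-a)]
        with n hn hna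
      have hn' : (0 : ℝ) < n := by exact_mod_cast hn
      have hna' : (n : ℝ) + a ≠ 0 := by linarith
      rw [← add_assoc, Real.Gamma_add_one hna', add_sub_cancel_right, Real.rpow_sub_one hn'.ne']
      field_simp
  obtain ⟨m, hm⟩ := exists_nat_gt (1 - a)
  exact key m a (by linarith)

/-- `Γ(n + a) / Γ(n + b) ∼ n ^ (a - b)`. -/
theorem tendsto_Gamma_ratio (a b : ℝ) :
    Tendsto (fun n : ℕ => Real.Gamma (n + a) / Real.Gamma (n + b) * (n : ℝ) ^ (b - a))
      atTop (𝓝 1) := by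
  have h := (tendsto_Gamma_div_factorial a).div (tendsto_Gamma_div_factorial b) one_ne_zero
  rw [div_one] at h
  refine h.congr' ?_
  filter_upwards [eventually_gt_atTop 0] with n hn
  have hn' : (0 : ℝ) < n := by exact_mod_cast hn
  have : (n : ℝ) ^ (b - a) = (n : ℝ) ^ (b - 1) / (n : ℝ) ^ (a - 1) := by
    rw [← Real.rpow_sub hn']; congr 1; ring
  have h1 := (Real.rpow_pos_of_pos hn' (a - 1)).ne'
  have h2 := (Real.rpow_pos_of_pos hn' (b - 1)).ne'
  have h3 : (n.factorial : ℝ) ≠ 0 := by positivity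
  simp only [Pi.div_apply, this]
  field_simp

theorem tendsto_mul_rpow_of_mul_rpow {f g : ℕ → ℝ} {p q L M : ℝ}
    (hf : Tendsto (fun n : ℕ => f n * (n : ℝ) ^ p) atTop (𝓝 L))
    (hg : Tendsto (fun n : ℕ => g n * (n : ℝ) ^ q) atTop (𝓝 M)) :
    Tendsto (fun n : ℕ => f n * g n * (n : ℝ) ^ (p + q)) atTop (𝓝 (L * M)) := by
  refine (hf.mul hg).congr' ?_
  filter_upwards [eventually_gt_atTop 0] with n hn
  have hn' : (0 : ℝ) < n := by exact_mod_cast hn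
  rw [Real.rpow_add hn']; ring

theorem tendsto_natCast_add_mul_rpow (c : ℝ) :
    Tendsto (fun n : ℕ => ((n : ℝ) + c) * (n : ℝ) ^ (-1 : ℝ)) atTop (𝓝 1) := by
  have h := (tendsto_natCast_div_add_atTop (𝕜 := ℝ) c).inv₀ one_ne_zero
  rw [inv_one] at h
  refine h.congr fun n => ?_
  rw [inv_div, Real.rpow_neg_one, div_eq_mul_inv]

theorem summable_of_tendsto_mul_rpow {f : ℕ → ℝ} {p L : ℝ} (hp : 1 < p)
    (hf : Tendsto (fun n : ℕ => f n * (n : ℝ) ^ p) atTop (𝓝 L)) : Summable f := by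
  refine summable_of_isBigO_nat (Real.summable_nat_rpow_inv.2 hp) ?_
  have h1 : (fun n : ℕ => f n * (n : ℝ) ^ p) =O[atTop] (fun _ => (1 : ℝ)) := hf.isBigO_one ℝ
  have h2 := h1.mul (Asymptotics.isBigO_refl (fun n : ℕ => ((n : ℝ) ^ p)⁻¹) atTop)
  refine (h2.congr' ?_ ?_)
  · filter_upwards [eventually_gt_atTop 0] with n hn
    have hn' : (0 : ℝ) < n := by exact_mod_cast hn
    have := (Real.rpow_pos_of_pos hn' p).ne'
    field_simp
  · filter_upwards with n
    simp

theorem tendsto_zero_of_tendsto_mul_rpow {f : ℕ → ℝ} {p L : ℝ} (hp : 0 < p)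
    (hf : Tendsto (fun n : ℕ => f n * (n : ℝ) ^ p) atTop (𝓝 L)) : Tendsto f atTop (𝓝 0) := by
  have h := hf.mul ((tendsto_rpow_neg_atTop hp).comp tendsto_natCast_atTop_atTop)
  rw [mul_zero] at h
  refine h.congr' ?_
  filter_upwards [eventually_gt_atTop 0] with n hn
  have hn' : (0 : ℝ) < n := by exact_mod_cast hn
  have := (Real.rpow_pos_of_pos hn' p).ne'
  simp only [Function.comp, Real.rpow_neg hn'.le]
  field_simp

/-- The cosine-power integral `∫_{-π/2}^{π/2} cos^s t cos(2ut) dt`. -/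
noncomputable def cosInt (s u : ℝ) : ℝ :=
  ∫ t in (-(Real.pi / 2))..(Real.pi / 2), Real.cos t ^ s * Real.cos (2 * u * t)

theorem intervalIntegrable_cos_rpow {s : ℝ} (hs : -1 < s) :
    IntervalIntegrable (fun t => Real.cos t ^ s) volume (-(Real.pi / 2)) (Real.pi / 2) := by
  have hpi := Real.pi_pos
  have hmeas : Measurable (fun t => Real.cos t ^ s) := by fun_prop
  have hright : IntervalIntegrable (fun t => Real.cos t ^ s) volume 0 (Real.pi / 2) := by
    have h0 : IntervalIntegrable (fun t : ℝ => t ^ s) volume 0 (Real.pi / 2) :=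
      intervalIntegral.intervalIntegrable_rpow' hs
    have h1 := (h0.comp_sub_left (Real.pi / 2)).symm
    simp only [sub_zero, sub_self] at h1
    have h2 : IntervalIntegrable (fun t : ℝ => (2 / Real.pi) ^ s * (Real.pi / 2 - t) ^ s + 1) volume 0
        (Real.pi / 2) := (h1.const_mul _).add intervalIntegrable_const
    refine h2.mono_fun hmeas.aestronglyMeasurable ?_
    rw [Set.uIoc_of_le (by positivity)]
    filter_upwards [ae_restrict_mem measurableSet_Ioc] with t ht
    have hc0 : 0 ≤ Real.cos t := Real.cos_nonneg_of_mem_Icc ⟨by linarith [ht.1], ht.2⟩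
    have hd : 0 ≤ Real.pi / 2 - t := by linarith [ht.2]
    have e1 : 0 ≤ (2 / Real.pi) ^ s * (Real.pi / 2 - t) ^ s :=
      mul_nonneg (by positivity) (Real.rpow_nonneg hd _)
    rw [Real.norm_of_nonneg (Real.rpow_nonneg hc0 _), Real.norm_of_nonneg (by linarith)]
    rcases le_or_gt 0 s with h | h
    · have := Real.rpow_le_one hc0 (Real.cos_le_one t) h
      linarith
    · rcases eq_or_lt_of_le hd with h' | h'
      · have ht' : t = Real.pi / 2 := by linarith
        rw [ht', Real.cos_pi_div_two]; simp [Real.zero_rpow h.ne]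
      · have h3 : 2 / Real.pi * (Real.pi / 2 - t) ≤ Real.cos t := by
          rw [← Real.sin_pi_div_two_sub]
          exact Real.mul_le_sin hd (by linarith [ht.1])
        have h4 := Real.rpow_le_rpow_of_nonpos (by positivity) h3 h.le
        rw [Real.mul_rpow (by positivity) hd] at h4
        linarith
  have hleft := (hright.comp_sub_left 0).symm
  simp only [zero_sub, Real.cos_neg, neg_zero] at hleft
  exact hleft.trans hright

theorem intervalIntegrable_cos_rpow_mul {s : ℝ} (hs : -1 < s) {g : ℝ → ℝ} (hg : Continuous g) :
    IntervalIntegrable (fun t => Real.cos t ^ s * g t) volume (-(Real.pi / 2)) (Real.pi / 2) :=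
  (intervalIntegrable_cos_rpow hs).mul_continuousOn hg.continuousOn

theorem cosInt_add_two {s : ℝ} (hs : -1 < s) (u : ℝ) :
    ((s + 2) ^ 2 - (2 * u) ^ 2) * cosInt (s + 2) u = (s + 2) * (s + 1) * cosInt s u := by
  have hpi := Real.pi_pos
  have hI1 := intervalIntegrable_cos_rpow_mul hs (g := fun t => Real.cos (2 * u * t)) (by fun_prop)
  have hI2 := intervalIntegrable_cos_rpow_mul (s := s + 2) (by linarith)
    (g := fun t => Real.cos (2 * u * t)) (by fun_prop)
  have key := intervalIntegral.integral_eq_sub_of_hasDerivAt_of_le (a := -(Real.pi / 2))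
    (b := Real.pi / 2) (by linarith)
    (f := fun t => 2 * u * Real.cos t ^ (s + 2) * Real.sin (2 * u * t)
      - (s + 2) * Real.cos t ^ (s + 1) * Real.sin t * Real.cos (2 * u * t))
    (f' := fun t => (s + 2) * (s + 1) * (Real.cos t ^ s * Real.cos (2 * u * t)) -
      ((s + 2) ^ 2 - (2 * u) ^ 2) * (Real.cos t ^ (s + 2) * Real.cos (2 * u * t)))
    ?_ ?_ ((hI1.const_mul _).sub (hI2.const_mul _))
  · rw [intervalIntegral.integral_sub (hI1.const_mul _) (hI2.const_mul _),
      intervalIntegral.integral_const_mul, intervalIntegral.integral_const_mul] at key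
    simp only [Real.cos_neg, Real.cos_pi_div_two, Real.zero_rpow (show s + 2 ≠ 0 by linarith),
      Real.zero_rpow (show s + 1 ≠ 0 by linarith)] at key
    unfold cosInt
    linarith
  · have h1 : Continuous (fun t => Real.cos t ^ (s + 2)) :=
      Real.continuous_cos.rpow_const fun t => Or.inr (by linarith)
    have h2 : Continuous (fun t => Real.cos t ^ (s + 1)) :=
      Real.continuous_cos.rpow_const fun t => Or.inr (by linarith)
    exact Continuous.continuousOn (by fun_prop)
  · intro t ht
    have hc : 0 < Real.cos t := Real.cos_pos_of_mem_Ioo ht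
    have d1 := (Real.hasDerivAt_cos t).rpow_const (p := s + 2) (Or.inl hc.ne')
    have d2 := (Real.hasDerivAt_cos t).rpow_const (p := s + 1) (Or.inl hc.ne')
    have dl : HasDerivAt (fun t : ℝ => 2 * u * t) (2 * u) t := by
      simpa using (hasDerivAt_id t).const_mul (2 * u)
    have d3 := ((d1.const_mul (2 * u)).mul dl.sin).sub
      (((d2.const_mul (s + 2)).mul (Real.hasDerivAt_sin t)).mul dl.cos)
    refine d3.congr_deriv ?_
    have e1 : Real.cos t ^ (s + 2 - 1) = Real.cos t ^ s * Real.cos t := by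
      rw [← Real.rpow_add_one hc.ne']; congr 1; ring
    have e2 : Real.cos t ^ (s + 2) = Real.cos t ^ s * Real.cos t ^ 2 := by
      rw [← Real.rpow_natCast, ← Real.rpow_add hc]; norm_num
    have e3 : Real.cos t ^ (s + 1 - 1) = Real.cos t ^ s := by congr 1; ring
    simp only [Pi.mul_apply]
    rw [e1, e2, e3, Real.rpow_add_one hc.ne']
    have e4 : Real.sin t ^ 2 = 1 - Real.cos t ^ 2 := by rw [Real.sin_sq]
    linear_combination (s + 2) * (s + 1) * Real.cos t ^ s * Real.cos (2 * u * t) * e4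

theorem cosInt_zero_right (s : ℝ) :
    cosInt s 0 = ∫ t in (-(Real.pi / 2))..(Real.pi / 2), Real.cos t ^ s := by
  simp [cosInt]

theorem cosInt_zero_zero : cosInt 0 0 = Real.pi := by
  simp [cosInt]

theorem cosInt_zero_antitone {s s' : ℝ} (hs : -1 < s) (h : s ≤ s') :
    cosInt s' 0 ≤ cosInt s 0 := by
  have hpi := Real.pi_pos
  rw [cosInt_zero_right, cosInt_zero_right]
  refine intervalIntegral.integral_mono_on_of_le_Ioo (by linarith)
    (intervalIntegrable_cos_rpow (by linarith)) (intervalIntegrable_cos_rpow hs) fun t ht => ?_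
  exact Real.rpow_le_rpow_of_exponent_ge (Real.cos_pos_of_mem_Ioo ht) (Real.cos_le_one t) h

theorem abs_cosInt_sub_le {s : ℝ} (hs : -1 < s) (u : ℝ) :
    |cosInt s 0 - cosInt s u| ≤ u ^ 2 * Real.pi ^ 2 / 2 * (cosInt s 0 / (s + 2)) := by
  have hpi := Real.pi_pos
  have hrec := cosInt_add_two hs 0
  have hI0 := intervalIntegrable_cos_rpow hs
  have hI1 := intervalIntegrable_cos_rpow_mul hs (g := fun t => Real.cos (2 * u * t)) (by fun_prop)
  have hI2 := intervalIntegrable_cos_rpow (s := s + 2) (by linarith)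
  have hI3 := intervalIntegrable_cos_rpow_mul hs
    (g := fun t => u ^ 2 * Real.pi ^ 2 / 2 * Real.sin t ^ 2) (by fun_prop)
  have h1 : cosInt s 0 / (s + 2) = cosInt s 0 - cosInt (s + 2) 0 := by
    have : s + 2 ≠ 0 := by linarith
    have h' : (s + 2) * cosInt (s + 2) 0 = (s + 1) * cosInt s 0 := by
      apply mul_left_cancel₀ this; linear_combination hrec
    field_simp
    linear_combination h'
  have hle : ∀ t ∈ Set.Ioo (-(Real.pi / 2)) (Real.pi / 2),
      Real.cos t ^ s - Real.cos t ^ s * Real.cos (2 * u * t) ≤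
      u ^ 2 * Real.pi ^ 2 / 2 * (Real.cos t ^ s - Real.cos t ^ (s + 2)) := by
    intro t ht
    have hc : 0 < Real.cos t := Real.cos_pos_of_mem_Ioo ht
    have e2 : Real.cos t ^ (s + 2) = Real.cos t ^ s * Real.cos t ^ 2 := by
      rw [← Real.rpow_natCast, ← Real.rpow_add hc]; norm_num
    have hp : 0 ≤ Real.cos t ^ s := by positivity
    have hb : 1 - Real.cos (2 * u * t) ≤ u ^ 2 * Real.pi ^ 2 / 2 * Real.sin t ^ 2 := by
      have h1 : 1 - (2 * u * t) ^ 2 / 2 ≤ Real.cos (2 * u * t) := Real.one_sub_sq_div_two_le_cos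
      have h2 : t ^ 2 ≤ (Real.pi / 2) ^ 2 * Real.sin t ^ 2 := by
        have h3 : 2 / Real.pi * |t| ≤ |Real.sin t| :=
          Real.mul_abs_le_abs_sin (abs_le.2 ⟨ht.1.le, ht.2.le⟩)
        have h4 : |t| ≤ Real.pi / 2 * |Real.sin t| := by
          calc |t| = Real.pi / 2 * (2 / Real.pi * |t|) := by field_simp
            _ ≤ _ := by gcongr
        have := pow_le_pow_left₀ (abs_nonneg t) h4 2
        rwa [mul_pow, sq_abs, sq_abs] at this
      nlinarith [mul_le_mul_of_nonneg_left h2 (sq_nonneg u)]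
    rw [e2]
    have := mul_le_mul_of_nonneg_left hb hp
    rw [Real.sin_sq] at this
    linarith
  have hnn : ∀ t ∈ Set.Ioo (-(Real.pi / 2)) (Real.pi / 2),
      0 ≤ Real.cos t ^ s - Real.cos t ^ s * Real.cos (2 * u * t) := by
    intro t ht
    have hc : 0 < Real.cos t := Real.cos_pos_of_mem_Ioo ht
    have hp : 0 ≤ Real.cos t ^ s := by positivity
    nlinarith [Real.cos_le_one (2 * u * t)]
  have hd : cosInt s 0 - cosInt s u = ∫ t in (-(Real.pi / 2))..(Real.pi / 2),
      (Real.cos t ^ s - Real.cos t ^ s * Real.cos (2 * u * t)) := by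
    rw [intervalIntegral.integral_sub hI0 hI1, cosInt_zero_right]; rfl
  rw [h1]
  have hr : u ^ 2 * Real.pi ^ 2 / 2 * (cosInt s 0 - cosInt (s + 2) 0) =
      ∫ t in (-(Real.pi / 2))..(Real.pi / 2),
        u ^ 2 * Real.pi ^ 2 / 2 * (Real.cos t ^ s - Real.cos t ^ (s + 2)) := by
    rw [intervalIntegral.integral_const_mul, intervalIntegral.integral_sub hI0 hI2,
      cosInt_zero_right, cosInt_zero_right]
  rw [hr, hd, abs_of_nonneg]
  · exact intervalIntegral.integral_mono_on_of_le_Ioo (by linarith) (hI0.sub hI1)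
      ((hI0.sub hI2).const_mul _) hle
  · have := intervalIntegral.integral_mono_on_of_le_Ioo (a := -(Real.pi / 2)) (b := Real.pi / 2)
      (f := fun _ => (0 : ℝ)) (by linarith) intervalIntegrable_const (hI0.sub hI1) hnn
    simpa using this

theorem inv_Gamma_eq (z : ℝ) : (Real.Gamma z)⁻¹ = z * (Real.Gamma (z + 1))⁻¹ := by
  rcases eq_or_ne z 0 with h | h
  · simp [h]
  · rw [Real.Gamma_add_one h, mul_inv, mul_inv_cancel_left₀ h]

/-- The closed form of `cosInt`. -/
noncomputable def cosIntVal (s u : ℝ) : ℝ :=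
  Real.pi * 2 ^ (-s) * Real.Gamma (s + 1) * (Real.Gamma (1 + s / 2 + u))⁻¹ *
    (Real.Gamma (1 + s / 2 - u))⁻¹

theorem cosIntVal_add_two {s : ℝ} (hs : -1 < s) (u : ℝ) :
    ((s + 2) ^ 2 - (2 * u) ^ 2) * cosIntVal (s + 2) u = (s + 2) * (s + 1) * cosIntVal s u := by
  unfold cosIntVal
  rw [inv_Gamma_eq (1 + s / 2 + u), inv_Gamma_eq (1 + s / 2 - u)]
  have h1 : Real.Gamma (s + 2 + 1) = (s + 2) * ((s + 1) * Real.Gamma (s + 1)) := by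
    rw [Real.Gamma_add_one (by linarith), show s + 2 = s + 1 + 1 by ring,
      Real.Gamma_add_one (by linarith)]
  have h2 : (2 : ℝ) ^ (-(s + 2)) = 2 ^ (-s) / 4 := by
    rw [neg_add, Real.rpow_add two_pos]; norm_num
    ring
  rw [h1, h2, show 1 + (s + 2) / 2 + u = 1 + s / 2 + u + 1 by ring,
    show 1 + (s + 2) / 2 - u = 1 + s / 2 - u + 1 by ring]
  ring

theorem cosIntVal_pos {s u : ℝ} (hs : -1 < s) (h1 : 0 < 1 + s / 2 + u) (h2 : 0 < 1 + s / 2 - u) :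
    0 < cosIntVal s u := by
  have := Real.Gamma_pos_of_pos h1
  have := Real.Gamma_pos_of_pos h2
  have := Real.Gamma_pos_of_pos (show 0 < s + 1 by linarith)
  have := Real.pi_pos
  unfold cosIntVal
  positivity

theorem cosInt_two_mul_nat (N : ℕ) : cosInt (2 * N) 0 = cosIntVal (2 * N) 0 := by
  induction N with
  | zero => simp [cosInt_zero_zero, cosIntVal]
  | succ N ih =>
    have hN : (-1 : ℝ) < 2 * N := by have : (0 : ℝ) ≤ N := by positivity
                                     linarith
    have h1 := cosInt_add_two hN 0
    have h2 := cosIntVal_add_two hN 0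
    rw [ih, ← h2] at h1
    have h3 : ((2 * (N : ℝ) + 2) ^ 2 - (2 * 0) ^ 2) ≠ 0 := by
      rw [mul_zero, zero_pow two_ne_zero, sub_zero]; positivity
    have := mul_left_cancel₀ h3 h1
    rw [show (2 * ((N + 1 : ℕ) : ℝ)) = 2 * N + 2 by push_cast; ring]
    exact this

/-- Ratios of the closed form at shifted arguments tend to `1`. -/
theorem tendsto_cosIntVal_ratio (s s' u : ℝ) :
    Tendsto (fun N : ℕ => cosIntVal (s' + 2 * N) 0 / cosIntVal (s + 2 * N) u) atTop (𝓝 1) := by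
  have key : ∀ s u : ℝ, Tendsto (fun N : ℕ => cosIntVal (s + 2 * N) u * (N : ℝ) ^ (1 / 2 : ℝ))
      atTop (𝓝 (Real.sqrt Real.pi)) := by
    intro s u
    have h1 := tendsto_mul_rpow_of_mul_rpow (tendsto_Gamma_ratio ((s + 1) / 2) (1 + s / 2 + u))
      (tendsto_Gamma_ratio (1 + s / 2) (1 + s / 2 - u))
    have h2 := h1.mul_const (Real.sqrt Real.pi)
    rw [one_mul, one_mul] at h2
    refine h2.congr fun N => ?_
    have hd := Real.Gamma_mul_Gamma_add_half (N + (s + 1) / 2)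
    rw [show (N : ℝ) + (s + 1) / 2 + 1 / 2 = N + (1 + s / 2) by ring,
      show 2 * ((N : ℝ) + (s + 1) / 2) = s + 2 * N + 1 by ring,
      show 1 - (s + 2 * N + 1) = -(s + 2 * (N : ℝ)) by ring] at hd
    have hpi : Real.pi = Real.sqrt Real.pi * Real.sqrt Real.pi :=
      (Real.mul_self_sqrt Real.pi_pos.le).symm
    unfold cosIntVal
    rw [show 1 + (s + 2 * (N : ℝ)) / 2 + u = N + (1 + s / 2 + u) by ring,
      show 1 + (s + 2 * (N : ℝ)) / 2 - u = N + (1 + s / 2 - u) by ring,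
      show 1 + s / 2 + u - (s + 1) / 2 + (1 + s / 2 - u - (1 + s / 2)) = 1 / 2 by ring]
    simp only [div_eq_mul_inv] at hd ⊢
    linear_combination (Real.Gamma (N + (1 + s * 2⁻¹ + u)))⁻¹ *
      (Real.Gamma (N + (1 + s * 2⁻¹ - u)))⁻¹ * (N : ℝ) ^ (1 * 2⁻¹ : ℝ) *
      (√Real.pi * hd - Real.Gamma (s + 2 * N + 1) * 2 ^ (-(s + 2 * (N : ℝ))) * hpi)
  have hsq : Real.sqrt Real.pi ≠ 0 := (Real.sqrt_pos.2 Real.pi_pos).ne'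
  have h := (key s' 0).div (key s u) hsq
  rw [div_self hsq] at h
  refine h.congr' ?_
  filter_upwards [eventually_gt_atTop 0] with n hn
  have hn' : (0 : ℝ) < n := by exact_mod_cast hn
  have := (Real.rpow_pos_of_pos hn' (1 / 2)).ne'
  simp only [Pi.div_apply]
  rw [mul_div_mul_right _ _ this]

theorem tendsto_cosInt_div_cosIntVal {s : ℝ} (hs : -1 < s) (u : ℝ) :
    Tendsto (fun N : ℕ => cosInt (s + 2 * N) u / cosIntVal (s + 2 * N) u) atTop (𝓝 1) := by
  obtain ⟨m, hm⟩ := exists_nat_ge (s / 2)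
  have hev : ∀ᶠ N : ℕ in atTop, 0 < cosIntVal (s + 2 * N) u := by
    filter_upwards [tendsto_natCast_atTop_atTop.eventually_gt_atTop |u|, eventually_ge_atTop 1]
      with N hN hN1
    have h1 : (1 : ℝ) ≤ N := by exact_mod_cast hN1
    have := neg_abs_le u
    have := le_abs_self u
    exact cosIntVal_pos (by linarith) (by linarith) (by linarith)
  have h0 : Tendsto (fun N : ℕ => cosInt (s + 2 * N) 0 / cosIntVal (s + 2 * N) u) atTop (𝓝 1) := by
    refine tendsto_of_tendsto_of_tendsto_of_le_of_le' (tendsto_cosIntVal_ratio s (2 * m) u)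
      (tendsto_cosIntVal_ratio s (-2) u) ?_ ?_
    · filter_upwards [hev] with N hN
      gcongr
      rw [show 2 * (m : ℝ) + 2 * N = 2 * ((m + N : ℕ) : ℝ) by push_cast; ring,
        ← cosInt_two_mul_nat]
      refine cosInt_zero_antitone ?_ ?_
      · have : (0 : ℝ) ≤ N := by positivity
        linarith
      · push_cast; linarith
    · filter_upwards [hev, eventually_ge_atTop 1] with N hN hN1
      obtain ⟨M, rfl⟩ := Nat.exists_eq_add_of_le' hN1
      have : (0 : ℝ) ≤ M := by positivity
      gcongr
      rw [show -2 + 2 * ((M + 1 : ℕ) : ℝ) = 2 * (M : ℝ) by push_cast; ring, ← cosInt_two_mul_nat]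
      exact cosInt_zero_antitone (by linarith) (by push_cast; linarith)
  have h1 : Tendsto (fun N : ℕ => u ^ 2 * Real.pi ^ 2 / 2 * (1 / (s + 2 * N + 2))) atTop (𝓝 0) := by
    rw [show (0 : ℝ) = u ^ 2 * Real.pi ^ 2 / 2 * 0 by ring]
    refine Tendsto.const_mul _ (tendsto_const_nhds.div_atTop ?_)
    exact tendsto_atTop_add_const_right _ _ (tendsto_atTop_add_const_left _ _
      (tendsto_natCast_atTop_atTop.const_mul_atTop two_pos))
  have h2 := h1.mul h0
  rw [zero_mul] at h2
  have h3 : Tendsto (fun N : ℕ => cosInt (s + 2 * N) 0 / cosIntVal (s + 2 * N) u -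
      cosInt (s + 2 * N) u / cosIntVal (s + 2 * N) u) atTop (𝓝 0) := by
    refine squeeze_zero_norm' ?_ h2
    filter_upwards [hev] with N hN
    have h4 : (0 : ℝ) ≤ N := by positivity
    rw [← sub_div, norm_div, Real.norm_eq_abs, Real.norm_of_nonneg hN.le, ← mul_div_assoc]
    gcongr
    refine (abs_cosInt_sub_le (by linarith) u).trans_eq ?_
    ring
  have := h0.sub h3
  simpa using this

/-- Cauchy's evaluation of `∫ cos^s t cos(2ut) dt`. -/
theorem cosInt_eq {s : ℝ} (hs : -1 < s) (u : ℝ) : cosInt s u = cosIntVal s u := by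
  have key : ∀ N : ℕ, ∃ c : ℝ, cosInt s u = c * cosInt (s + 2 * N) u ∧
      cosIntVal s u = c * cosIntVal (s + 2 * N) u := by
    intro N
    induction N with
    | zero => exact ⟨1, by simp, by simp⟩
    | succ N ih =>
      obtain ⟨c, h1, h2⟩ := ih
      have hN : -1 < s + 2 * (N : ℝ) := by have : (0 : ℝ) ≤ N := by positivity
                                           linarith
      have e1 := cosInt_add_two hN u
      have e2 := cosIntVal_add_two hN u
      set a := s + 2 * (N : ℝ) with ha
      have hne : (a + 2) * (a + 1) ≠ 0 := by
        exact mul_ne_zero (by linarith) (by linarith)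
      rw [show s + 2 * ((N + 1 : ℕ) : ℝ) = a + 2 by rw [ha]; push_cast; ring]
      refine ⟨c * (((a + 2) ^ 2 - (2 * u) ^ 2) / ((a + 2) * (a + 1))), ?_, ?_⟩
      · rw [h1, eq_div_of_mul_eq hne ((mul_comm _ _).trans e1.symm)]; ring
      · rw [h2, eq_div_of_mul_eq hne ((mul_comm _ _).trans e2.symm)]; ring
  have hlim := (tendsto_cosInt_div_cosIntVal hs u).const_mul (cosIntVal s u)
  rw [mul_one] at hlim
  refine tendsto_nhds_unique (tendsto_const_nhds.congr' ?_) hlim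
  filter_upwards [tendsto_natCast_atTop_atTop.eventually_gt_atTop |u|, eventually_ge_atTop 1]
    with N hN hN1
  have h1 : (1 : ℝ) ≤ N := by exact_mod_cast hN1
  have := neg_abs_le u
  have := le_abs_self u
  have hpos : 0 < cosIntVal (s + 2 * N) u :=
    cosIntVal_pos (by linarith) (by linarith) (by linarith)
  obtain ⟨c, h1, h2⟩ := key N
  rw [h1, h2]
  field_simp

theorem inv_Gamma_eq_sin {z : ℝ} (hz : z < 1) :
    (Real.Gamma z)⁻¹ = Real.Gamma (1 - z) * Real.sin (Real.pi * z) / Real.pi := by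
  have h := Real.Gamma_mul_Gamma_one_sub z
  have hG := (Real.Gamma_pos_of_pos (show 0 < 1 - z by linarith)).ne'
  have hpi := Real.pi_pos.ne'
  rw [← eq_div_iff hG] at h
  rw [h]
  field_simp

theorem summable_nat_inv_Gamma_mul {α β : ℝ} (h : 2 < α + β) :
    Summable (fun n : ℕ => (Real.Gamma (α - n))⁻¹ * (Real.Gamma (β + n))⁻¹) := by
  have h1 : Summable (fun n : ℕ => Real.Gamma (n + (1 - α)) / Real.Gamma (n + β)) :=
    summable_of_tendsto_mul_rpow (p := β - (1 - α)) (by linarith) (tendsto_Gamma_ratio _ _)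
  refine Summable.of_norm_bounded_eventually_nat (h1.mul_right (1 / Real.pi)) ?_
  filter_upwards [tendsto_natCast_atTop_atTop.eventually_gt_atTop α,
    tendsto_natCast_atTop_atTop.eventually_gt_atTop (-β)] with n hn hn'
  have g1 := Real.Gamma_pos_of_pos (show 0 < n + (1 - α) by linarith)
  have g2 := Real.Gamma_pos_of_pos (show 0 < n + β by linarith)
  have hpi := Real.pi_pos
  rw [inv_Gamma_eq_sin (by linarith), norm_mul, norm_inv, norm_div, norm_mul,
    show 1 - (α - n) = n + (1 - α) by ring, add_comm β, Real.norm_of_nonneg g1.le,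
    Real.norm_of_nonneg g2.le, Real.norm_of_nonneg hpi.le, Real.norm_eq_abs]
  have := Real.abs_sin_le_one (Real.pi * (α - n))
  calc Real.Gamma (n + (1 - α)) * |Real.sin (Real.pi * (α - n))| / Real.pi * (Real.Gamma (n + β))⁻¹
      ≤ Real.Gamma (n + (1 - α)) * 1 / Real.pi * (Real.Gamma (n + β))⁻¹ := by gcongr
    _ = _ := by ring

theorem summable_inv_Gamma_mul {α β : ℝ} (h : 2 < α + β) :
    Summable (fun j : ℤ => (Real.Gamma (α - j))⁻¹ * (Real.Gamma (β + j))⁻¹) := by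
  refine Summable.of_nat_of_neg ?_ ?_
  · simpa using summable_nat_inv_Gamma_mul h
  · have := summable_nat_inv_Gamma_mul (show 2 < β + α by linarith)
    refine this.congr fun n => ?_
    push_cast
    rw [mul_comm, sub_neg_eq_add, ← sub_eq_add_neg]

theorem summable_cosInt {s : ℝ} (hs : 0 < s) (u : ℝ) : Summable (fun j : ℤ => cosInt s (u - j)) := by
  have h := (summable_inv_Gamma_mul (α := 1 + s / 2 + u) (β := 1 + s / 2 - u)
    (by linarith)).mul_left (Real.pi * 2 ^ (-s) * Real.Gamma (s + 1))
  refine h.congr fun j => ?_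
  rw [cosInt_eq (by linarith), cosIntVal, add_sub_assoc, ← sub_add]
  ring

theorem IntervalIntegrable.complex_ofReal {f : ℝ → ℝ} {a b : ℝ}
    (h : IntervalIntegrable f volume a b) :
    IntervalIntegrable (fun t => (f t : ℂ)) volume a b :=
  ⟨h.1.ofReal, h.2.ofReal⟩

theorem integral_cos_rpow_mul_exp {s : ℝ} (hs : -1 < s) (u : ℝ) :
    ∫ t in (-(Real.pi / 2))..(Real.pi / 2),
      ((Real.cos t ^ s : ℝ) : ℂ) * Complex.exp (2 * u * t * Complex.I) = (cosInt s u : ℂ) := by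
  have hI1 := intervalIntegrable_cos_rpow_mul hs (g := fun t => Real.cos (2 * u * t)) (by fun_prop)
  have hI2 := intervalIntegrable_cos_rpow_mul hs (g := fun t => Real.sin (2 * u * t)) (by fun_prop)
  have hodd : ∫ t in (-(Real.pi / 2))..(Real.pi / 2), Real.cos t ^ s * Real.sin (2 * u * t) = 0 := by
    have := intervalIntegral.integral_comp_neg (a := -(Real.pi / 2)) (b := Real.pi / 2)
      (fun t => Real.cos t ^ s * Real.sin (2 * u * t))
    simp only [Real.cos_neg, mul_neg, Real.sin_neg, neg_neg, intervalIntegral.integral_neg] at this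
    linarith
  have h : ∀ t : ℝ, ((Real.cos t ^ s : ℝ) : ℂ) * Complex.exp (2 * u * t * Complex.I) =
      ((Real.cos t ^ s * Real.cos (2 * u * t) : ℝ) : ℂ) +
      ((Real.cos t ^ s * Real.sin (2 * u * t) : ℝ) : ℂ) * Complex.I := by
    intro t
    rw [Complex.exp_mul_I]; push_cast; ring
  simp_rw [h]
  rw [intervalIntegral.integral_add hI1.complex_ofReal
      (hI2.complex_ofReal.mul_const _),
    intervalIntegral.integral_mul_const, intervalIntegral.integral_ofReal,
    intervalIntegral.integral_ofReal, hodd]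
  simp [cosInt]

/-- Fourier expansion of `cos^s t e^{2iut}` on `(-π/2, π/2]`. -/
theorem hasSum_cosInt_mul_exp {s : ℝ} (hs : 0 < s) (u : ℝ) {t : ℝ}
    (ht : t ∈ Set.Ioc (-(Real.pi / 2)) (Real.pi / 2)) :
    HasSum (fun j : ℤ => ((1 / Real.pi * cosInt s (u - j) : ℝ) : ℂ) *
      Complex.exp (2 * j * t * Complex.I))
      (((Real.cos t ^ s : ℝ) : ℂ) * Complex.exp (2 * u * t * Complex.I)) := by
  have hpi := Real.pi_pos
  have : Fact (0 < Real.pi) := ⟨hpi⟩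
  set f : ℝ → ℂ := fun t => ((Real.cos t ^ s : ℝ) : ℂ) * Complex.exp (2 * u * t * Complex.I) with hf
  have hab : -(Real.pi / 2) + Real.pi = Real.pi / 2 := by ring
  have hcont : Continuous f := by
    have h1 : Continuous (fun t => Real.cos t ^ s) :=
      Real.continuous_cos.rpow_const fun t => Or.inr hs.le
    fun_prop
  have hend : f (-(Real.pi / 2)) = f (-(Real.pi / 2) + Real.pi) := by
    rw [hab]
    simp only [hf, Real.cos_neg, Real.cos_pi_div_two, Real.zero_rpow hs.ne', Complex.ofReal_zero,
      zero_mul]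
  set F : C(AddCircle Real.pi, ℂ) := ⟨AddCircle.liftIoc Real.pi (-(Real.pi / 2)) f,
    AddCircle.liftIoc_continuous hend hcont.continuousOn⟩ with hF
  have hcoeff : ∀ j : ℤ, fourierCoeff F j = ((1 / Real.pi * cosInt s (u - j) : ℝ) : ℂ) := by
    intro j
    rw [fourierCoeff_eq_intervalIntegral _ _ (-(Real.pi / 2)), hab, Complex.ofReal_mul,
      ← integral_cos_rpow_mul_exp (by linarith), Complex.real_smul]
    congr 1
    refine intervalIntegral.integral_congr_ae (ae_of_all _ fun x hx => ?_)
    rw [Set.uIoc_of_le (by linarith)] at hx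
    have : F (x : AddCircle Real.pi) = f x :=
      AddCircle.liftIoc_coe_apply (f := f) (by rwa [hab])
    rw [this, fourier_coe_apply, smul_eq_mul, hf]
    simp only
    rw [mul_left_comm, ← Complex.exp_add]
    congr 2
    have : (Real.pi : ℂ) ≠ 0 := by exact_mod_cast hpi.ne'
    push_cast
    field_simp
    ring
  have hsum : Summable (fourierCoeff F) := by
    have := ((summable_cosInt hs u).mul_left (1 / Real.pi)).map Complex.ofRealHom
      Complex.continuous_ofReal
    exact this.congr fun j => (hcoeff j).symm
  have key := has_pointwise_sum_fourier_series_of_summable hsum (t : AddCircle Real.pi)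
  have e : F (t : AddCircle Real.pi) = f t :=
    AddCircle.liftIoc_coe_apply (f := f) (by rwa [hab])
  rw [e] at key
  refine key.congr_fun fun j => ?_
  rw [hcoeff, fourier_coe_apply, smul_eq_mul]
  congr 2
  have : (Real.pi : ℂ) ≠ 0 := by exact_mod_cast hpi.ne'
  field_simp

theorem hasSum_cosInt_mul_cosInt {s₁ s₂ : ℝ} (h₁ : 0 < s₁) (h₂ : -1 < s₂) (u₁ u₂ : ℝ) :
    HasSum (fun j : ℤ => 1 / Real.pi * cosInt s₁ (u₁ - j) * cosInt s₂ (u₂ + j))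
      (cosInt (s₁ + s₂) (u₁ + u₂)) := by
  have hpi := Real.pi_pos
  have hle : -(Real.pi / 2) ≤ Real.pi / 2 := by linarith
  set μ := volume.restrict (Set.Ioc (-(Real.pi / 2)) (Real.pi / 2)) with hμ
  set F : ℤ → ℝ → ℂ := fun j t => ((1 / Real.pi * cosInt s₁ (u₁ - j) : ℝ) : ℂ) *
    (((Real.cos t ^ s₂ : ℝ) : ℂ) * Complex.exp (2 * ((u₂ + j : ℝ) : ℂ) * t * Complex.I)) with hF
  have hnint : ∀ v : ℝ, Integrable (fun t : ℝ =>
      ((Real.cos t ^ s₂ : ℝ) : ℂ) * Complex.exp (2 * (v : ℂ) * t * Complex.I)) μ := by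
    intro v
    exact (intervalIntegrable_iff_integrableOn_Ioc_of_le hle).1
      ((intervalIntegrable_cos_rpow h₂).complex_ofReal.mul_continuousOn
        (Continuous.continuousOn (by fun_prop)))
  have hFint : ∀ j, Integrable (F j) μ := fun j => (hnint _).const_mul _
  have hnorm : ∀ j, ∫ t, ‖F j t‖ ∂μ = ‖1 / Real.pi * cosInt s₁ (u₁ - j)‖ *
      ∫ t, ‖Real.cos t ^ s₂‖ ∂μ := by
    intro j
    rw [← integral_const_mul]
    refine integral_congr_ae (ae_of_all _ fun t => ?_)
    simp only [hF]
    rw [norm_mul, norm_mul, Complex.norm_real, Complex.norm_real,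
      show 2 * ((u₂ + j : ℝ) : ℂ) * t * Complex.I = ((2 * (u₂ + j) * t : ℝ) : ℂ) * Complex.I by
        push_cast; ring, Complex.norm_exp_ofReal_mul_I, mul_one]
  have hs : Summable (fun j => ∫ t, ‖F j t‖ ∂μ) := by
    simp_rw [hnorm]
    exact (((summable_cosInt h₁ u₁).mul_left (1 / Real.pi)).norm).mul_right _
  have key := hasSum_integral_of_summable_integral_norm hFint hs
  have hl : ∀ j, ∫ t, F j t ∂μ =
      ((1 / Real.pi * cosInt s₁ (u₁ - j) * cosInt s₂ (u₂ + j) : ℝ) : ℂ) := by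
    intro j
    simp only [hF]
    rw [integral_const_mul, hμ, ← intervalIntegral.integral_of_le hle,
      integral_cos_rpow_mul_exp h₂]
    push_cast; ring
  have hr : ∫ t, (∑' j, F j t) ∂μ = ((cosInt (s₁ + s₂) (u₁ + u₂) : ℝ) : ℂ) := by
    rw [← integral_cos_rpow_mul_exp (by linarith), intervalIntegral.integral_of_le hle, hμ,
      integral_Ioc_eq_integral_Ioo, integral_Ioc_eq_integral_Ioo]
    refine setIntegral_congr_fun measurableSet_Ioo fun t ht => ?_
    have h := (hasSum_cosInt_mul_exp h₁ u₁ (Set.Ioo_subset_Ioc_self ht)).mul_right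
      (((Real.cos t ^ s₂ : ℝ) : ℂ) * Complex.exp (2 * (u₂ : ℂ) * t * Complex.I))
    have hc : 0 < Real.cos t := Real.cos_pos_of_mem_Ioo ht
    have e1 : ∀ j : ℤ, F j t = ((1 / Real.pi * cosInt s₁ (u₁ - j) : ℝ) : ℂ) *
      Complex.exp (2 * j * t * Complex.I) *
      (((Real.cos t ^ s₂ : ℝ) : ℂ) * Complex.exp (2 * (u₂ : ℂ) * t * Complex.I)) := by
      intro j
      simp only [hF]
      rw [show 2 * ((u₂ + j : ℝ) : ℂ) * t * Complex.I =
        2 * j * t * Complex.I + 2 * (u₂ : ℂ) * t * Complex.I by push_cast; ring, Complex.exp_add]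
      ring
    simp only [e1]
    rw [h.tsum_eq, Real.rpow_add hc, show 2 * ((u₁ + u₂ : ℝ) : ℂ) * t * Complex.I =
        2 * u₁ * t * Complex.I + 2 * (u₂ : ℂ) * t * Complex.I by push_cast; ring, Complex.exp_add]
    push_cast; ring
  rw [hr] at key
  simp only [hl] at key
  exact_mod_cast key

/-- **Dougall's bilateral `₂H₂` sum.** -/
theorem hasSum_bilateral {α₁ β₁ α₂ β₂ : ℝ} (h₁ : 2 < α₁ + β₁) (h₂ : 1 < α₂ + β₂) :
    HasSum (fun j : ℤ => (Real.Gamma (α₁ - j))⁻¹ * (Real.Gamma (β₁ + j))⁻¹ *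
        (Real.Gamma (α₂ - j))⁻¹ * (Real.Gamma (β₂ + j))⁻¹)
      (Real.Gamma (α₁ + β₁ + α₂ + β₂ - 3) * (Real.Gamma (α₁ + β₁ - 1))⁻¹ *
        (Real.Gamma (α₁ + β₂ - 1))⁻¹ * (Real.Gamma (α₂ + β₁ - 1))⁻¹ *
        (Real.Gamma (α₂ + β₂ - 1))⁻¹) := by
  have hpi := Real.pi_pos
  have g1 := Real.Gamma_pos_of_pos (show 0 < α₁ + β₁ - 1 by linarith)
  have g2 := Real.Gamma_pos_of_pos (show 0 < α₂ + β₂ - 1 by linarith)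
  have h := hasSum_cosInt_mul_cosInt (s₁ := α₁ + β₁ - 2) (s₂ := α₂ + β₂ - 2) (by linarith)
    (by linarith) ((α₁ - β₁) / 2) ((β₂ - α₂) / 2)
  have p1 : (0 : ℝ) < 2 ^ (-(α₁ + β₁ - 2)) := by positivity
  have p2 : (0 : ℝ) < 2 ^ (-(α₂ + β₂ - 2)) := by positivity
  have h' := h.mul_left (Real.pi * 2 ^ (-(α₁ + β₁ - 2)) * 2 ^ (-(α₂ + β₂ - 2)) *
    Real.Gamma (α₁ + β₁ - 1) * Real.Gamma (α₂ + β₂ - 1))⁻¹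
  have hval : (Real.pi * 2 ^ (-(α₁ + β₁ - 2)) * 2 ^ (-(α₂ + β₂ - 2)) *
      Real.Gamma (α₁ + β₁ - 1) * Real.Gamma (α₂ + β₂ - 1))⁻¹ *
      cosInt (α₁ + β₁ - 2 + (α₂ + β₂ - 2)) ((α₁ - β₁) / 2 + (β₂ - α₂) / 2) =
      Real.Gamma (α₁ + β₁ + α₂ + β₂ - 3) * (Real.Gamma (α₁ + β₁ - 1))⁻¹ *
        (Real.Gamma (α₁ + β₂ - 1))⁻¹ * (Real.Gamma (α₂ + β₁ - 1))⁻¹ *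
        (Real.Gamma (α₂ + β₂ - 1))⁻¹ := by
    rw [cosInt_eq (by linarith), cosIntVal, neg_add, Real.rpow_add two_pos]
    rw [show 1 + (α₁ + β₁ - 2 + (α₂ + β₂ - 2)) / 2 + ((α₁ - β₁) / 2 + (β₂ - α₂) / 2) =
        α₁ + β₂ - 1 by ring,
      show 1 + (α₁ + β₁ - 2 + (α₂ + β₂ - 2)) / 2 - ((α₁ - β₁) / 2 + (β₂ - α₂) / 2) =
        α₂ + β₁ - 1 by ring,
      show α₁ + β₁ - 2 + (α₂ + β₂ - 2) + 1 = α₁ + β₁ + α₂ + β₂ - 3 by ring]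
    field_simp
  rw [hval] at h'
  refine h'.congr_fun fun j => ?_
  rw [cosInt_eq (by linarith), cosInt_eq (by linarith), cosIntVal, cosIntVal]
  rw [show 1 + (α₁ + β₁ - 2) / 2 + ((α₁ - β₁) / 2 - j) = α₁ - j by ring,
    show 1 + (α₁ + β₁ - 2) / 2 - ((α₁ - β₁) / 2 - j) = β₁ + j by ring,
    show 1 + (α₂ + β₂ - 2) / 2 + ((β₂ - α₂) / 2 + j) = β₂ + j by ring,
    show 1 + (α₂ + β₂ - 2) / 2 - ((β₂ - α₂) / 2 + j) = α₂ - j by ring,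
    show α₁ + β₁ - 2 + 1 = α₁ + β₁ - 1 by ring, show α₂ + β₂ - 2 + 1 = α₂ + β₂ - 1 by ring]
  field_simp

theorem tsum_eq_of_telescoping {f G : ℕ → ℝ} (hf : Summable f) (hfG : ∀ j, f j = G j - G (j + 1))
    (hG : Tendsto G atTop (𝓝 0)) : ∑' j, f j = G 0 := by
  refine tendsto_nhds_unique hf.hasSum.tendsto_sum_nat ?_
  simp_rw [hfG, Finset.sum_range_sub']
  simpa using tendsto_const_nhds.sub hG

/-- Summation of a Wilf–Zeilberger pair. -/
theorem tendsto_sum_of_wz {F H : ℕ → ℕ → ℝ} {L : ℝ}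
    (hrel : ∀ k j, F k (j + 1) - F k j = H (k + 1) j - H k j)
    (hF : ∀ k, Tendsto (F k) atTop (𝓝 0)) (hH : ∀ k, Summable (H k))
    (hlim : Tendsto (fun K => ∑' j, H K j) atTop (𝓝 L)) :
    Tendsto (fun K => ∑ k ∈ Finset.range K, F k 0) atTop (𝓝 (∑' j, H 0 j - L)) := by
  have h : ∀ k, F k 0 = ∑' j, H k j - ∑' j, H (k + 1) j := by
    intro k
    rw [← (hH k).tsum_sub (hH (k + 1))]
    refine (tsum_eq_of_telescoping ((hH k).sub (hH (k + 1))) (fun j => ?_) (hF k)).symm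
    linarith [hrel k j]
  simp_rw [h, Finset.sum_range_sub']
  exact tendsto_const_nhds.sub hlim

theorem summable_Gamma_ratio {a b : ℝ} (h : a + 1 < b) :
    Summable (fun j : ℕ => Real.Gamma (a + j) / Real.Gamma (b + j)) := by
  refine summable_of_tendsto_mul_rpow (p := b - a) (by linarith)
    ((tendsto_Gamma_ratio a b).congr fun j => ?_)
  rw [add_comm a, add_comm b]

theorem tsum_Gamma_ratio {a b : ℝ} (ha : 0 < a) (h : a + 1 < b) :
    ∑' j : ℕ, Real.Gamma (a + j) / Real.Gamma (b + j) =
      Real.Gamma a / ((b - a - 1) * Real.Gamma (b - 1)) := by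
  have hd : b - a - 1 ≠ 0 := by linarith
  have := tsum_eq_of_telescoping (summable_Gamma_ratio h)
    (G := fun j : ℕ => Real.Gamma (a + j) / ((b - a - 1) * Real.Gamma (b - 1 + j))) ?_ ?_
  · simpa using this
  · intro j
    have hj : (0 : ℝ) ≤ j := by positivity
    push_cast
    have e1 : Real.Gamma (a + (j + 1)) = (a + j) * Real.Gamma (a + j) := by
      rw [← add_assoc, Real.Gamma_add_one (by linarith)]
    have e2 : Real.Gamma (b - 1 + (j + 1)) = Real.Gamma (b + j) := by congr 1; ring
    have e3 : Real.Gamma (b + j) = (b - 1 + j) * Real.Gamma (b - 1 + j) := by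
      rw [← Real.Gamma_add_one (by linarith)]; congr 1; ring
    have g := (Real.Gamma_pos_of_pos (show 0 < b - 1 + j by linarith)).ne'
    have hb : b - 1 + j ≠ 0 := by linarith
    rw [e1, e2, e3]
    field_simp
    ring
  · have := (tendsto_zero_of_tendsto_mul_rpow (p := b - 1 - a) (by linarith)
      (tendsto_Gamma_ratio a (b - 1))).mul_const (b - a - 1)⁻¹
    rw [zero_mul] at this
    refine this.congr fun j => ?_
    rw [add_comm a, add_comm (b - 1), div_eq_mul_inv, div_eq_mul_inv, mul_inv]
    ring

/-- The Gamma ratio `Γ(a + j) / Γ(b + j)` is at most its value at `j = 0` when `0 < a ≤ b`. -/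
theorem Gamma_ratio_le {a b : ℝ} (ha : 0 < a) (hab : a ≤ b) (j : ℕ) :
    Real.Gamma (a + j) / Real.Gamma (b + j) ≤ Real.Gamma a / Real.Gamma b := by
  induction j with
  | zero => simp
  | succ j ih =>
    refine le_trans ?_ ih
    have hj : (0 : ℝ) ≤ j := by positivity
    have g1 := Real.Gamma_pos_of_pos (show 0 < a + j by linarith)
    have g2 := Real.Gamma_pos_of_pos (show 0 < b + j by linarith)
    push_cast
    rw [← add_assoc, ← add_assoc, Real.Gamma_add_one (by linarith), Real.Gamma_add_one (by linarith),
      mul_div_mul_comm]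
    have : (a + j) / (b + j) ≤ 1 := by rw [div_le_one (by linarith)]; linarith
    exact mul_le_of_le_one_left (by positivity) this

/-- The base term of the first series, without its linear factor. -/
noncomputable def baseTerm (t : ℝ) : ℝ :=
  Real.Gamma (t + 1 / 2) ^ 3 * Real.Gamma (2 * t + 1 / 2) /
    (Real.pi ^ 2 * Real.Gamma (t + 1) * Real.Gamma (2 * t + 1) ^ 2)

theorem Gamma_quarter_mul : Real.Gamma (1 / 4) * Real.Gamma (3 / 4) = 2 ^ (1 / 2 : ℝ) * Real.pi := by
  have h := Real.Gamma_mul_Gamma_add_half (1 / 4)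
  norm_num [Real.Gamma_one_half_eq] at h
  rw [h]
  have := Real.mul_self_sqrt Real.pi_pos.le
  linear_combination (2 : ℝ) ^ (1 / 2 : ℝ) * this

theorem baseTerm_eq {t : ℝ} (ht : -1 / 2 < t) :
    (2 : ℝ) ^ (-(2 : ℝ) * t) * (Real.Gamma (1 / 2 + t) / Real.Gamma (1 / 2) *
      (Real.Gamma (1 / 4 + t) / Real.Gamma (1 / 4)) * (Real.Gamma (3 / 4 + t) / Real.Gamma (3 / 4)) /
        (Real.Gamma (1 + t) / Real.Gamma 1) ^ 3) = baseTerm t := by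
  have h1 := Real.Gamma_mul_Gamma_add_half (t + 1 / 4)
  have h2 := Real.Gamma_mul_Gamma_add_half (t + 1 / 2)
  have h3 := Gamma_quarter_mul
  rw [show t + 1 / 4 + 1 / 2 = 3 / 4 + t by ring, show 2 * (t + 1 / 4) = 2 * t + 1 / 2 by ring,
    show 1 - (2 * t + 1 / 2) = -2 * t + 1 / 2 by ring, add_comm t, Real.rpow_add two_pos] at h1
  rw [show t + 1 / 2 + 1 / 2 = t + 1 by ring, show 2 * (t + 1 / 2) = 2 * t + 1 by ring,
    show 1 - (2 * t + 1) = -2 * t by ring] at h2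
  have g1 := (Real.Gamma_pos_of_pos (show 0 < t + 1 by linarith)).ne'
  have g2 := (Real.Gamma_pos_of_pos (show 0 < 2 * t + 1 by linarith)).ne'
  have g3 := (Real.Gamma_pos_of_pos (show (0 : ℝ) < 1 / 4 by norm_num)).ne'
  have g4 := (Real.Gamma_pos_of_pos (show (0 : ℝ) < 3 / 4 by norm_num)).ne'
  have g5 : Real.Gamma (3 / 4) = 2 ^ (1 / 2 : ℝ) * Real.pi / Real.Gamma (1 / 4) := by
    rw [← h3]; field_simp
  have hpi := Real.pi_pos.ne'
  have hsq : √Real.pi ≠ 0 := (Real.sqrt_pos.2 Real.pi_pos).ne'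
  have hss : √Real.pi ^ 2 = Real.pi := Real.sq_sqrt Real.pi_pos.le
  have p1 : (2 : ℝ) ^ (1 / 2 : ℝ) ≠ 0 := by positivity
  have e2 : (2 : ℝ) ^ (-2 * t) = Real.Gamma (t + 1 / 2) * Real.Gamma (t + 1) /
      (Real.Gamma (2 * t + 1) * √Real.pi) := by
    rw [h2]; field_simp
  unfold baseTerm
  rw [Real.Gamma_one, Real.Gamma_one_half_eq, add_comm 1 t, add_comm (1 / 2) t, div_one]
  calc _ = (2 : ℝ) ^ (-2 * t) * (Real.Gamma (t + 1 / 2) / √Real.pi *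
        ((Real.Gamma (1 / 4 + t) * Real.Gamma (3 / 4 + t)) /
          (Real.Gamma (1 / 4) * Real.Gamma (3 / 4))) / Real.Gamma (t + 1) ^ 3) := by
        rw [mul_div_mul_comm]; ring
    _ = (2 : ℝ) ^ (-2 * t) * (Real.Gamma (t + 1 / 2) / √Real.pi *
        ((Real.Gamma (2 * t + 1 / 2) * (2 ^ (-2 * t) * 2 ^ (1 / 2 : ℝ)) * √Real.pi) /
          (2 ^ (1 / 2 : ℝ) * Real.pi)) / Real.Gamma (t + 1) ^ 3) := by rw [h1, h3]
    _ = _ := by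
        rw [e2]
        field_simp
        rw [hss]
        ring

theorem summable_baseTerm {t : ℝ} (ht : -1 / 2 < t) :
    Summable (fun n : ℕ => (-1 : ℝ) ^ n * (baseTerm (n + t) * (20 * (n + t) + 3))) := by
  have h := tendsto_mul_rpow_of_mul_rpow (tendsto_mul_rpow_of_mul_rpow (tendsto_mul_rpow_of_mul_rpow
    (tendsto_Gamma_ratio (1 / 2 + t) (1 + t)) (tendsto_Gamma_ratio (1 / 4 + t) (1 + t)))
    (tendsto_Gamma_ratio (3 / 4 + t) (1 + t))) (tendsto_natCast_add_mul_rpow (t + 3 / 20))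
  have h0 := tendsto_zero_of_tendsto_mul_rpow (by ring_nf; norm_num) h
  set c := (20 : ℝ) * 2 ^ (-2 * t) * (Real.Gamma (1 / 2) * Real.Gamma (1 / 4) * Real.Gamma (3 / 4))⁻¹
  have hgeo : Summable (fun n : ℕ => c * (1 / 4 : ℝ) ^ n) :=
    (summable_geometric_of_lt_one (by norm_num) (by norm_num)).mul_left c
  refine summable_of_isBigO_nat hgeo ?_
  have hO := (Asymptotics.isBigO_refl (fun n : ℕ => (-1 : ℝ) ^ n * (c * (1 / 4 : ℝ) ^ n)) atTop).mul
    (h0.isBigO_one ℝ)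
  refine Asymptotics.IsBigO.trans (hO.congr_left ?_) ?_
  · intro n
    have hn : (0 : ℝ) ≤ n := by positivity
    rw [← baseTerm_eq (by linarith), Real.Gamma_one, div_one,
      show -(2 : ℝ) * (n + t) = (-2) * t + (-2 : ℝ) * n by ring, Real.rpow_add two_pos,
      Real.rpow_mul two_pos.le (-2 : ℝ) n, Real.rpow_natCast]
    rw [show (2 : ℝ) ^ (-2 : ℝ) = 1 / 4 by norm_num [Real.rpow_neg]]
    simp only [c]
    rw [show (1 : ℝ) / 2 + (n + t) = n + (1 / 2 + t) by ring,
      show (1 : ℝ) / 4 + (n + t) = n + (1 / 4 + t) by ring,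
      show (3 : ℝ) / 4 + (n + t) = n + (3 / 4 + t) by ring,
      show (1 : ℝ) + (n + t) = n + (1 + t) by ring]
    have g3 := (Real.Gamma_pos_of_pos (show (0 : ℝ) < 1 / 4 by norm_num)).ne'
    have g4 := (Real.Gamma_pos_of_pos (show (0 : ℝ) < 3 / 4 by norm_num)).ne'
    have g5 := (Real.Gamma_pos_of_pos (show (0 : ℝ) < 1 / 2 by norm_num)).ne'
    have g1 := (Real.Gamma_pos_of_pos (show 0 < n + (1 + t) by linarith)).ne'
    field_simp
    ring
  · refine Asymptotics.IsBigO.of_bound 1 (Eventually.of_forall fun n => ?_)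
    simp

/-- The normalising factor of the companion sum of the first series. -/
noncomputable def wzWeight (n : ℝ) : ℝ :=
  8 / (Real.pi ^ 2 * √Real.pi) * (Real.Gamma (2 * n + 1 / 2) * Real.Gamma (n + 1 / 2) ^ 2 /
    Real.Gamma (2 * n))

/-- The summand `Γ(n+1/2+j)Γ(1/2+j) / (Γ(2n+1+j)Γ(n+1+j))` of the companion sum. -/
noncomputable def wzTerm (n j : ℝ) : ℝ :=
  Real.Gamma (n + 1 / 2 + j) * Real.Gamma (1 / 2 + j) /
    (Real.Gamma (2 * n + 1 + j) * Real.Gamma (n + 1 + j))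

/-- The Wilf–Zeilberger certificate of the companion sum of the first series. -/
noncomputable def wzCert (n j : ℝ) : ℝ :=
  wzWeight n * wzTerm n j *
    (((20 * n + 3) * (2 * n + 1) + 2 * (16 * n + 5) * j + 8 * j ^ 2) / (16 * n * (2 * n + 1 + j)))

theorem wzWeight_add_one {n : ℝ} (hn : 0 < n) :
    wzWeight (n + 1) = wzWeight n *
      ((2 * n + 1 / 2) * (2 * n + 3 / 2) * (n + 1 / 2) ^ 2 / (2 * n * (2 * n + 1))) := by
  unfold wzWeight
  have e1 : Real.Gamma (2 * (n + 1) + 1 / 2) =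
      (2 * n + 3 / 2) * ((2 * n + 1 / 2) * Real.Gamma (2 * n + 1 / 2)) := by
    rw [← Real.Gamma_add_one (by linarith), ← show 2 * n + 3 / 2 = 2 * n + 1 / 2 + 1 by ring,
      ← Real.Gamma_add_one (by linarith)]
    congr 1; ring
  have e2 : Real.Gamma (n + 1 + 1 / 2) = (n + 1 / 2) * Real.Gamma (n + 1 / 2) := by
    rw [← Real.Gamma_add_one (by linarith)]; congr 1; ring
  have e3 : Real.Gamma (2 * (n + 1)) = (2 * n + 1) * (2 * n * Real.Gamma (2 * n)) := by
    rw [← Real.Gamma_add_one (by linarith), ← Real.Gamma_add_one (by linarith)]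
    congr 1; ring
  rw [e1, e2, e3]
  have g := (Real.Gamma_pos_of_pos (show 0 < 2 * n by linarith)).ne'
  generalize Real.Gamma (2 * n + 1 / 2) = A, Real.Gamma (n + 1 / 2) = B at *
  have h1 : 2 * n + 1 ≠ 0 := by linarith
  field_simp

theorem wzWeight_pos {n : ℝ} (hn : 0 < n) : 0 < wzWeight n := by
  have := Real.Gamma_pos_of_pos (show 0 < 2 * n by linarith)
  have := Real.Gamma_pos_of_pos (show 0 < n + 1 / 2 by linarith)
  have := Real.Gamma_pos_of_pos (show 0 < 2 * n + 1 / 2 by linarith)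
  have := Real.pi_pos
  unfold wzWeight
  positivity

theorem wzTerm_nonneg {n j : ℝ} (hn : 0 < n) (hj : 0 ≤ j) : 0 ≤ wzTerm n j := by
  have := Real.Gamma_pos_of_pos (show 0 < n + 1 / 2 + j by linarith)
  have := Real.Gamma_pos_of_pos (show 0 < 1 / 2 + j by linarith)
  have := Real.Gamma_pos_of_pos (show 0 < 2 * n + 1 + j by linarith)
  have := Real.Gamma_pos_of_pos (show 0 < n + 1 + j by linarith)
  unfold wzTerm
  positivity

theorem wzCert_sub {n j : ℝ} (hn : 0 < n) (hj : 0 ≤ j) :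
    wzCert n j - wzCert n (j + 1) =
      wzWeight n * wzTerm n j + wzWeight (n + 1) * wzTerm (n + 1) j := by
  rw [wzWeight_add_one hn]
  unfold wzCert wzTerm
  have e1 : Real.Gamma (n + 1 + 1 / 2 + j) = (n + 1 / 2 + j) * Real.Gamma (n + 1 / 2 + j) := by
    rw [← Real.Gamma_add_one (by linarith)]; congr 1; ring
  have e1' : Real.Gamma (n + 1 / 2 + (j + 1)) = (n + 1 / 2 + j) * Real.Gamma (n + 1 / 2 + j) := by
    rw [← Real.Gamma_add_one (by linarith)]; congr 1; ring
  have e2 : Real.Gamma (1 / 2 + (j + 1)) = (1 / 2 + j) * Real.Gamma (1 / 2 + j) := by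
    rw [← Real.Gamma_add_one (by linarith)]; congr 1; ring
  have e3 : Real.Gamma (2 * n + 1 + (j + 1)) = (2 * n + 1 + j) * Real.Gamma (2 * n + 1 + j) := by
    rw [← Real.Gamma_add_one (by linarith)]; congr 1; ring
  have e3' : Real.Gamma (2 * (n + 1) + 1 + j) =
      (2 * n + 2 + j) * ((2 * n + 1 + j) * Real.Gamma (2 * n + 1 + j)) := by
    rw [← e3, ← show 2 * n + 2 + j = 2 * n + 1 + (j + 1) by ring,
      ← Real.Gamma_add_one (by linarith)]
    congr 1; ring
  have e4 : Real.Gamma (n + 1 + 1 + j) = (n + 1 + j) * Real.Gamma (n + 1 + j) := by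
    rw [← Real.Gamma_add_one (by linarith)]; congr 1; ring
  have e4' : Real.Gamma (n + 1 + (j + 1)) = (n + 1 + j) * Real.Gamma (n + 1 + j) := by
    rw [← Real.Gamma_add_one (by linarith)]; congr 1; ring
  rw [e1, e1', e2, e3, e3', e4, e4']
  have g3 := (Real.Gamma_pos_of_pos (show 0 < 2 * n + 1 + j by linarith)).ne'
  have g4 := (Real.Gamma_pos_of_pos (show 0 < n + 1 + j by linarith)).ne'
  generalize Real.Gamma (n + 1 / 2 + j) = A, Real.Gamma (1 / 2 + j) = B,
    Real.Gamma (2 * n + 1 + j) = C, Real.Gamma (n + 1 + j) = D, wzWeight n = W at *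
  have h1 : 2 * n + 1 + j ≠ 0 := by linarith
  have h2 : 2 * n + 1 + (j + 1) ≠ 0 := by linarith
  have h2' : 2 * n + 2 + j ≠ 0 := by linarith
  have h3 : n + 1 + j ≠ 0 := by linarith
  have h4 : 2 * n + 1 ≠ 0 := by linarith
  rw [show 2 * n + 1 + (j + 1) = 2 * n + 2 + j by ring]
  field_simp
  ring

theorem wzCert_zero {n : ℝ} (hn : 0 < n) : wzCert n 0 = baseTerm n * (20 * n + 3) := by
  unfold wzCert wzTerm wzWeight baseTerm
  simp only [add_zero, mul_zero, ne_eq, OfNat.ofNat_ne_zero, not_false_eq_true, zero_pow]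
  rw [Real.Gamma_one_half_eq, Real.Gamma_add_one (show 2 * n ≠ 0 by linarith)]
  have g1 := (Real.Gamma_pos_of_pos (show 0 < 2 * n by linarith)).ne'
  have g4 := (Real.Gamma_pos_of_pos (show 0 < n + 1 by linarith)).ne'
  generalize Real.Gamma (2 * n + 1 / 2) = A, Real.Gamma (n + 1 / 2) = B,
    Real.Gamma (n + 1) = C, Real.Gamma (2 * n) = D at *
  have h4 : 2 * n + 1 ≠ 0 := by linarith
  have hpi := Real.pi_pos.ne'
  have hsq : √Real.pi ≠ 0 := (Real.sqrt_pos.2 Real.pi_pos).ne'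
  field_simp
  ring

theorem tendsto_wzTerm (n : ℝ) :
    Tendsto (fun j : ℕ => wzTerm n j * (j : ℝ) ^ (2 * n + 1)) atTop (𝓝 1) := by
  have h := tendsto_mul_rpow_of_mul_rpow (tendsto_Gamma_ratio (n + 1 / 2) (2 * n + 1))
    (tendsto_Gamma_ratio (1 / 2) (n + 1))
  rw [one_mul] at h
  refine h.congr fun j => ?_
  unfold wzTerm
  rw [mul_div_mul_comm, show 2 * n + 1 - (n + 1 / 2) + (n + 1 - 1 / 2) = 2 * n + 1 by ring,
    add_comm (j : ℝ), add_comm (j : ℝ), add_comm (j : ℝ), add_comm (j : ℝ)]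

theorem summable_wzTerm {n : ℝ} (hn : 0 < n) : Summable (fun j : ℕ => wzTerm n j) :=
  summable_of_tendsto_mul_rpow (by linarith) (tendsto_wzTerm n)

theorem tendsto_wzCert {n : ℝ} (hn : 0 < n) :
    Tendsto (fun j : ℕ => wzCert n j) atTop (𝓝 0) := by
  have h := tendsto_mul_rpow_of_mul_rpow (tendsto_wzTerm n) (tendsto_natCast_add_mul_rpow 1)
  have h0 := (tendsto_zero_of_tendsto_mul_rpow (by linarith) h).const_mul (10 * wzWeight n * (1 + n⁻¹))
  rw [mul_zero] at h0
  refine squeeze_zero (fun j => ?_) (fun j => ?_) h0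
  · have := wzTerm_nonneg hn (Nat.cast_nonneg (α := ℝ) j)
    have := wzWeight_pos hn
    have hj : (0 : ℝ) ≤ j := by positivity
    unfold wzCert
    positivity
  · have h1 := wzTerm_nonneg hn (Nat.cast_nonneg (α := ℝ) j)
    have h2 := wzWeight_pos hn
    have hj : (0 : ℝ) ≤ j := by positivity
    unfold wzCert
    have : ((20 * n + 3) * (2 * n + 1) + 2 * (16 * n + 5) * j + 8 * (j : ℝ) ^ 2) /
        (16 * n * (2 * n + 1 + j)) ≤ 10 * (1 + n⁻¹) * (j + 1) := by
      rw [div_le_iff₀ (by positivity), show 10 * (1 + n⁻¹) * ((j : ℝ) + 1) *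
        (16 * n * (2 * n + 1 + j)) = 160 * (n + 1) * ((j : ℝ) + 1) * (2 * n + 1 + j) by field_simp; norm_num]
      have := mul_nonneg hn.le hj
      have := mul_nonneg this hj
      have := mul_nonneg hn.le (mul_nonneg hn.le hj)
      nlinarith [mul_nonneg hn.le hn.le]
    calc _ ≤ wzWeight n * wzTerm n j * (10 * (1 + n⁻¹) * (j + 1)) := by gcongr
      _ = _ := by ring

theorem tsum_wzTerm_le {n : ℝ} (hn : 1 / 2 < n) :
    ∑' j : ℕ, wzTerm n j ≤ Real.Gamma (n + 1 / 2) / Real.Gamma (n + 1) *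
      (Real.Gamma (1 / 2) / ((2 * n - 1 / 2) * Real.Gamma (2 * n))) := by
  have h := tsum_Gamma_ratio (a := 1 / 2) (b := 2 * n + 1) (by norm_num) (by linarith)
  have hs := summable_Gamma_ratio (a := 1 / 2) (b := 2 * n + 1) (by linarith)
  rw [show 2 * n + 1 - 1 / 2 - 1 = 2 * n - 1 / 2 by ring, add_sub_cancel_right] at h
  rw [← h, ← tsum_mul_left]
  refine (summable_wzTerm (by linarith)).tsum_le_tsum (fun j => ?_) (hs.mul_left _)
  have hj : (0 : ℝ) ≤ j := by positivity
  have := Real.Gamma_pos_of_pos (show 0 < 1 / 2 + (j : ℝ) by linarith)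
  have := Real.Gamma_pos_of_pos (show 0 < 2 * n + 1 + j by linarith)
  unfold wzTerm
  rw [mul_comm (Real.Gamma (2 * n + 1 + j)), mul_div_mul_comm]
  have := Gamma_ratio_le (a := n + 1 / 2) (b := n + 1) (by linarith) (by linarith) j
  gcongr

theorem tendsto_wzWeight_mul_tsum {y : ℝ} (hy : 1 / 2 < y) :
    Tendsto (fun m : ℕ => wzWeight (y + m) * ∑' j : ℕ, wzTerm (y + m) j) atTop (𝓝 0) := by
  have hr1 := (tendsto_Gamma_ratio (2 * y + 1 / 2) (2 * y)).comp
    (tendsto_id.const_mul_atTop' (show 0 < 2 by norm_num))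
  have hr1' : Tendsto (fun m : ℕ => Real.Gamma (2 * (y + m) + 1 / 2) / Real.Gamma (2 * (y + m)) *
      (m : ℝ) ^ (-1 / 2 : ℝ)) atTop (𝓝 (2 ^ (1 / 2 : ℝ))) := by
    have := hr1.mul_const ((2 : ℝ) ^ (1 / 2 : ℝ))
    rw [one_mul] at this
    refine this.congr fun m => ?_
    simp only [Function.comp, id]
    push_cast
    rw [show 2 * (m : ℝ) + (2 * y + 1 / 2) = 2 * (y + m) + 1 / 2 by ring,
      show 2 * (m : ℝ) + 2 * y = 2 * (y + m) by ring,
      show 2 * y - (2 * y + 1 / 2) = -1 / 2 by ring,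
      Real.mul_rpow two_pos.le (Nat.cast_nonneg _), mul_assoc, mul_comm _ ((m : ℝ) ^ _), mul_assoc,
      ← Real.rpow_add two_pos]
    norm_num
  have hr4 := (tendsto_natCast_add_mul_rpow (y - 1 / 4)).inv₀ one_ne_zero
  have hr4' : Tendsto (fun m : ℕ => ((m : ℝ) + (y - 1 / 4))⁻¹ * (m : ℝ) ^ (1 : ℝ)) atTop (𝓝 1⁻¹) := by
    refine hr4.congr fun m => ?_
    rw [mul_inv, Real.rpow_neg_one, inv_inv, Real.rpow_one]
  have h := tendsto_mul_rpow_of_mul_rpow (tendsto_mul_rpow_of_mul_rpow (tendsto_mul_rpow_of_mul_rpow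
    hr1' (tendsto_Gamma_ratio (y + 1 / 2) y)) (tendsto_Gamma_ratio (y + 1 / 2) (y + 1))) hr4'
  have h0 := (tendsto_zero_of_tendsto_mul_rpow (by ring_nf; norm_num) h).const_mul
    (8 / (Real.pi ^ 2 * √Real.pi) * √Real.pi * (√Real.pi / 2))
  rw [mul_zero] at h0
  refine squeeze_zero (fun m => ?_) (fun m => ?_) h0
  · have hm : (0 : ℝ) ≤ m := by positivity
    exact mul_nonneg (wzWeight_pos (by linarith)).le
      (tsum_nonneg fun j => wzTerm_nonneg (by linarith) (by positivity))
  · have hm : (0 : ℝ) ≤ m := by positivity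
    have hn : 1 / 2 < y + m := by linarith
    refine (mul_le_mul_of_nonneg_left (tsum_wzTerm_le hn) (wzWeight_pos (by linarith)).le).trans ?_
    have hd := Real.Gamma_mul_Gamma_add_half (y + m)
    rw [show (m : ℝ) + (y + 1 / 2) = y + m + 1 / 2 by ring,
      show (m : ℝ) + (y + 1) = y + m + 1 by ring, show (m : ℝ) + y = y + m by ring,
      show (m : ℝ) + (y - 1 / 4) = (2 * (y + m) - 1 / 2) / 2 by ring, Real.Gamma_one_half_eq]
    unfold wzWeight
    generalize y + (m : ℝ) = n at *
    have g0 := Real.Gamma_pos_of_pos (show 0 < n by linarith)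
    have g1 := Real.Gamma_pos_of_pos (show 0 < 2 * n by linarith)
    have g2 := Real.Gamma_pos_of_pos (show 0 < n + 1 / 2 by linarith)
    have g3 := Real.Gamma_pos_of_pos (show 0 < n + 1 by linarith)
    have g4 := Real.Gamma_pos_of_pos (show 0 < 2 * n + 1 / 2 by linarith)
    have hp : (2 : ℝ) ^ (1 - 2 * n) ≤ 1 :=
      Real.rpow_le_one_of_one_le_of_nonpos (by norm_num) (by linarith)
    have hsq : 0 < √Real.pi := Real.sqrt_pos.2 Real.pi_pos
    have hb : Real.Gamma (n + 1 / 2) / Real.Gamma (2 * n) ≤ √Real.pi / Real.Gamma n := by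
      rw [div_le_div_iff₀ g1 g0, mul_comm, hd, mul_comm (√Real.pi)]
      gcongr
      exact mul_le_of_le_one_right g1.le hp
    have hpi := Real.pi_pos
    have h2n : 0 < 2 * n - 1 / 2 := by linarith
    calc _ = 8 / (Real.pi ^ 2 * √Real.pi) * √Real.pi * (Real.Gamma (2 * n + 1 / 2) / Real.Gamma (2 * n)
          * Real.Gamma (n + 1 / 2) * (Real.Gamma (n + 1 / 2) / Real.Gamma (n + 1)) *
          (2 * n - 1 / 2)⁻¹) * (Real.Gamma (n + 1 / 2) / Real.Gamma (2 * n)) := by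
          rw [div_eq_mul_inv √Real.pi, mul_inv (2 * n - 1 / 2)]
          ring
      _ ≤ 8 / (Real.pi ^ 2 * √Real.pi) * √Real.pi * (Real.Gamma (2 * n + 1 / 2) / Real.Gamma (2 * n)
          * Real.Gamma (n + 1 / 2) * (Real.Gamma (n + 1 / 2) / Real.Gamma (n + 1)) *
          (2 * n - 1 / 2)⁻¹) * (√Real.pi / Real.Gamma n) := by gcongr
      _ = _ := by rw [inv_div]; ring

theorem tsum_baseTerm_eq {y : ℝ} (hy : 1 / 2 < y) :
    ∑' m : ℕ, (-1 : ℝ) ^ m * (baseTerm (m + y) * (20 * (m + y) + 3)) =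
      wzWeight y * ∑' j : ℕ, wzTerm y j := by
  have hpos : ∀ m : ℕ, 0 < y + m := fun m => by
    have : (0 : ℝ) ≤ m := by positivity
    linarith
  have h := tendsto_sum_of_wz (L := 0)
    (F := fun m j => (-1 : ℝ) ^ m * wzCert (y + m) j)
    (H := fun m j => (-1 : ℝ) ^ m * (wzWeight (y + m) * wzTerm (y + m) j)) ?_ ?_ ?_ ?_
  · simp only [Nat.cast_zero, pow_zero, one_mul, add_zero, sub_zero, tsum_mul_left] at h
    refine tendsto_nhds_unique (summable_baseTerm (by linarith)).hasSum.tendsto_sum_nat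
      (h.congr fun K => Finset.sum_congr rfl fun m _ => ?_)
    rw [wzCert_zero (hpos m), add_comm y]
  · intro m j
    have := wzCert_sub (hpos m) (Nat.cast_nonneg (α := ℝ) j)
    push_cast
    rw [← add_assoc, pow_succ]
    linear_combination -(-1 : ℝ) ^ m * this
  · intro m
    simpa using (tendsto_wzCert (hpos m)).const_mul ((-1 : ℝ) ^ m)
  · intro m
    exact ((summable_wzTerm (hpos m)).mul_left _).mul_left _
  · simp only [tsum_mul_left]
    refine squeeze_zero_norm (fun m => ?_) (tendsto_wzWeight_mul_tsum hy)
    rw [norm_mul, norm_pow, norm_neg, norm_one, one_pow, one_mul, Real.norm_of_nonneg]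
    exact mul_nonneg (wzWeight_pos (hpos m)).le
      (tsum_nonneg fun j => wzTerm_nonneg (hpos m) (by positivity))

theorem inv_Gamma_eq_sin_of_ne {z : ℝ} (hz : Real.Gamma (1 - z) ≠ 0) :
    (Real.Gamma z)⁻¹ = Real.Gamma (1 - z) * Real.sin (Real.pi * z) / Real.pi := by
  have h := Real.Gamma_mul_Gamma_one_sub z
  have hpi := Real.pi_pos.ne'
  rw [← eq_div_iff hz] at h
  rw [h]
  field_simp

/-- The summand of the reflected half of the bilateral companion sum. -/
noncomputable def reflTerm (y r : ℝ) : ℝ :=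
  Real.Gamma (1 - 2 * y + r) * Real.Gamma (1 - y + r) /
    (Real.Gamma (3 / 2 - y + r) * Real.Gamma (3 / 2 + r))

theorem bilateral_term_nat {y : ℝ} (hy : 1 / 2 < y) (j : ℕ) :
    (Real.Gamma (1 / 2 - y - (j : ℤ)))⁻¹ * (Real.Gamma (2 * y + 1 + (j : ℤ)))⁻¹ *
        (Real.Gamma (1 / 2 - (j : ℤ)))⁻¹ * (Real.Gamma (y + 1 + (j : ℤ)))⁻¹ =
      Real.cos (Real.pi * y) / Real.pi ^ 2 * wzTerm y j := by
  have hj : (0 : ℝ) ≤ j := by positivity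
  push_cast
  rw [inv_Gamma_eq_sin (z := 1 / 2 - y - j) (by linarith),
    inv_Gamma_eq_sin (z := 1 / 2 - j) (by linarith)]
  have s1 : Real.sin (Real.pi * (1 / 2 - y - j)) = (-1) ^ j * Real.cos (Real.pi * y) := by
    rw [show Real.pi * (1 / 2 - y - j) = (Real.pi / 2 - Real.pi * y) - j * Real.pi by ring,
      Real.sin_sub_nat_mul_pi, Real.sin_pi_div_two_sub]
  have s2 : Real.sin (Real.pi * (1 / 2 - j)) = (-1) ^ j := by
    rw [show Real.pi * (1 / 2 - j) = Real.pi / 2 - j * Real.pi by ring,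
      Real.sin_sub_nat_mul_pi, Real.sin_pi_div_two, mul_one]
  have s3 : ((-1 : ℝ) ^ j) * (-1) ^ j = 1 := by rw [← mul_pow]; norm_num
  rw [s1, s2, show 1 - (1 / 2 - y - j) = y + 1 / 2 + j by ring,
    show (1 : ℝ) - (1 / 2 - j) = 1 / 2 + j by ring, wzTerm]
  simp only [div_eq_mul_inv, mul_inv]
  linear_combination Real.Gamma (y + 1 * 2⁻¹ + j) * Real.cos (Real.pi * y) * Real.pi⁻¹ *
    (Real.Gamma (2 * y + 1 + j))⁻¹ * Real.Gamma (1 * 2⁻¹ + j) * Real.pi⁻¹ *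
    (Real.Gamma (y + 1 + j))⁻¹ * s3

theorem HasSum.tsum_nat_add_tsum_neg {f : ℤ → ℝ} {a : ℝ} (hf : HasSum f a) {p q : ℕ → ℝ}
    (hp : ∀ n : ℕ, f n = p n) (hq : ∀ n : ℕ, f (-((n : ℤ) + 1)) = q n) :
    ∑' n, p n + ∑' n, q n = a := by
  have h1 : Summable p :=
    (hf.summable.comp_injective (Nat.cast_injective (R := ℤ))).congr hp
  have h2 : Summable q :=
    (hf.summable.comp_injective (i := fun n : ℕ => -((n : ℤ) + 1))
      fun a b hab => by simpa using hab).congr hq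
  refine HasSum.unique (HasSum.of_nat_of_neg_add_one ?_ ?_) hf
  · simpa only [hp] using h1.hasSum
  · simpa only [hq] using h2.hasSum

theorem tsum_bilateral {y : ℝ} (hy : 1 / 2 < y) :
    Real.cos (Real.pi * y) / Real.pi ^ 2 * ∑' j : ℕ, wzTerm y j +
      ∑' r : ℕ, (Real.Gamma (3 / 2 - y + r))⁻¹ * (Real.Gamma (2 * y - r))⁻¹ *
        (Real.Gamma (3 / 2 + r))⁻¹ * (Real.Gamma (y - r))⁻¹ =
      Real.Gamma (2 * y) * (Real.Gamma (y + 1 / 2) ^ 2 * √Real.pi * Real.Gamma (2 * y + 1 / 2))⁻¹ := by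
  have h := hasSum_bilateral (α₁ := 1 / 2 - y) (β₁ := 2 * y + 1) (α₂ := 1 / 2) (β₂ := y + 1)
    (by linarith) (by linarith)
  have h3 : ∀ r : ℕ, (Real.Gamma (1 / 2 - y - ((-((r : ℤ) + 1) : ℤ) : ℝ)))⁻¹ *
      (Real.Gamma (2 * y + 1 + ((-((r : ℤ) + 1) : ℤ) : ℝ)))⁻¹ *
      (Real.Gamma (1 / 2 - ((-((r : ℤ) + 1) : ℤ) : ℝ)))⁻¹ *
      (Real.Gamma (y + 1 + ((-((r : ℤ) + 1) : ℤ) : ℝ)))⁻¹ =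
      (Real.Gamma (3 / 2 - y + r))⁻¹ * (Real.Gamma (2 * y - r))⁻¹ *
        (Real.Gamma (3 / 2 + r))⁻¹ * (Real.Gamma (y - r))⁻¹ := by
    intro r
    push_cast
    rw [show 1 / 2 - y - -((r : ℝ) + 1) = 3 / 2 - y + r by ring,
      show 2 * y + 1 + -((r : ℝ) + 1) = 2 * y - r by ring,
      show 1 / 2 - -((r : ℝ) + 1) = 3 / 2 + r by ring,
      show y + 1 + -((r : ℝ) + 1) = y - r by ring]
  rw [← tsum_mul_left, h.tsum_nat_add_tsum_neg (bilateral_term_nat hy) h3,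
    show 1 / 2 - y + (2 * y + 1) + 1 / 2 + (y + 1) - 3 = 2 * y by ring,
    show 1 / 2 - y + (2 * y + 1) - 1 = y + 1 / 2 by ring,
    show 1 / 2 - y + (y + 1) - 1 = 1 / 2 by ring,
    show 1 / 2 + (2 * y + 1) - 1 = 2 * y + 1 / 2 by ring,
    show 1 / 2 + (y + 1) - 1 = y + 1 / 2 by ring, Real.Gamma_one_half_eq]
  simp only [mul_inv]
  ring

theorem wzWeight_mul_tsum {y : ℝ} (hy : 1 / 2 < y) (hnint : ∀ m : ℤ, 2 * y ≠ m)
    (hcos : Real.cos (Real.pi * y) ≠ 0) :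
    wzWeight y * ∑' j : ℕ, wzTerm y j = 8 / (Real.pi * Real.cos (Real.pi * y)) -
      wzWeight y * (2 * Real.sin (Real.pi * y) ^ 2 * ∑' r : ℕ, reflTerm y r) := by
  have h := tsum_bilateral hy
  have hr : ∀ r : ℕ, (Real.Gamma (3 / 2 - y + r))⁻¹ * (Real.Gamma (2 * y - r))⁻¹ *
        (Real.Gamma (3 / 2 + r))⁻¹ * (Real.Gamma (y - r))⁻¹ =
      Real.cos (Real.pi * y) / Real.pi ^ 2 * (2 * Real.sin (Real.pi * y) ^ 2 * reflTerm y r) := by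
    intro r
    have n1 : Real.Gamma (1 - (2 * y - r)) ≠ 0 := by
      refine Real.Gamma_ne_zero fun m hm => hnint (m + 1 + r) ?_
      push_cast; linarith
    have n2 : Real.Gamma (1 - (y - r)) ≠ 0 := by
      refine Real.Gamma_ne_zero fun m hm => hnint (2 * (m + 1 + r)) ?_
      push_cast; linarith
    rw [inv_Gamma_eq_sin_of_ne n1, inv_Gamma_eq_sin_of_ne n2]
    have s1 : Real.sin (Real.pi * (2 * y - r)) =
        (-1) ^ r * (2 * Real.sin (Real.pi * y) * Real.cos (Real.pi * y)) := by
      rw [show Real.pi * (2 * y - r) = 2 * (Real.pi * y) - r * Real.pi by ring,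
        Real.sin_sub_nat_mul_pi, Real.sin_two_mul]
    have s2 : Real.sin (Real.pi * (y - r)) = (-1) ^ r * Real.sin (Real.pi * y) := by
      rw [show Real.pi * (y - r) = Real.pi * y - r * Real.pi by ring, Real.sin_sub_nat_mul_pi]
    have s3 : ((-1 : ℝ) ^ r) * (-1) ^ r = 1 := by rw [← mul_pow]; norm_num
    rw [s1, s2, show 1 - (2 * y - r) = 1 - 2 * y + r by ring,
      show 1 - (y - r) = 1 - y + r by ring, reflTerm]
    simp only [div_eq_mul_inv, mul_inv]
    linear_combination (Real.Gamma (3 * 2⁻¹ - y + r))⁻¹ * Real.Gamma (1 - 2 * y + r) * Real.pi⁻¹ ^ 2 *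
      2 * Real.sin (Real.pi * y) ^ 2 * Real.cos (Real.pi * y) * (Real.Gamma (3 * 2⁻¹ + r))⁻¹ *
      Real.Gamma (1 - y + r) * s3
  simp only [hr, tsum_mul_left] at h
  have g1 := (Real.Gamma_pos_of_pos (show 0 < 2 * y by linarith)).ne'
  have g2 := (Real.Gamma_pos_of_pos (show 0 < y + 1 / 2 by linarith)).ne'
  have g4 := (Real.Gamma_pos_of_pos (show 0 < 2 * y + 1 / 2 by linarith)).ne'
  have hpi := Real.pi_pos.ne'
  have hsq : √Real.pi ≠ 0 := (Real.sqrt_pos.2 Real.pi_pos).ne'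
  have hss : √Real.pi ^ 2 = Real.pi := Real.sq_sqrt Real.pi_pos.le
  have hW : wzWeight y * (Real.Gamma (2 * y) *
      (Real.Gamma (y + 1 / 2) ^ 2 * √Real.pi * Real.Gamma (2 * y + 1 / 2))⁻¹) =
      8 / Real.pi ^ 3 := by
    unfold wzWeight
    generalize Real.Gamma (2 * y + 1 / 2) = A, Real.Gamma (y + 1 / 2) = B at *
    field_simp
    rw [hss]
  rw [← h] at hW
  rw [eq_sub_iff_add_eq, eq_div_iff (mul_ne_zero hpi hcos)]
  have : 8 = Real.pi ^ 3 * (8 / Real.pi ^ 3) := by field_simp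
  rw [this, ← hW]
  field_simp

theorem wzWeight_one_mul_tsum : wzWeight 1 * ∑' j : ℕ, wzTerm 1 j = 3 - 8 / Real.pi := by
  have h := tsum_bilateral (y := 1) (by norm_num)
  have hpi := Real.pi_pos.ne'
  have hsq : √Real.pi ≠ 0 := (Real.sqrt_pos.2 Real.pi_pos).ne'
  have hss : √Real.pi ^ 2 = Real.pi := Real.sq_sqrt Real.pi_pos.le
  have g3 : Real.Gamma (3 / 2) = √Real.pi / 2 := by
    rw [show (3 / 2 : ℝ) = 1 / 2 + 1 by norm_num, Real.Gamma_add_one (by norm_num),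
      Real.Gamma_one_half_eq]; ring
  have g5 : Real.Gamma (5 / 2) = 3 * √Real.pi / 4 := by
    rw [show (5 / 2 : ℝ) = 3 / 2 + 1 by norm_num, Real.Gamma_add_one (by norm_num), g3]; ring
  have hr : ∑' r : ℕ, (Real.Gamma (3 / 2 - 1 + r))⁻¹ * (Real.Gamma (2 * 1 - r))⁻¹ *
        (Real.Gamma (3 / 2 + r))⁻¹ * (Real.Gamma (1 - r))⁻¹ = 2 / Real.pi := by
    rw [tsum_eq_single 0]
    · norm_num [Real.Gamma_one_half_eq, g3]
      field_simp
      rw [hss]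
    · intro r hr
      obtain ⟨k, rfl⟩ := Nat.exists_eq_succ_of_ne_zero hr
      have : Real.Gamma (1 - ((k.succ : ℕ) : ℝ)) = 0 := by
        rw [show 1 - ((k.succ : ℕ) : ℝ) = -(k : ℝ) by push_cast; ring, Real.Gamma_neg_nat_eq_zero]
      rw [this]; simp
  rw [hr] at h
  have g2 : Real.Gamma 2 = 1 := Real.Gamma_two
  unfold wzWeight
  norm_num [g2, g3, g5] at h ⊢
  have h' : ∑' j : ℕ, wzTerm 1 j = 2 * Real.pi - 16 / 3 := by
    field_simp at h
    have h4 : √Real.pi ^ 4 = Real.pi ^ 2 := by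
      rw [show (4 : ℕ) = 2 * 2 from rfl, pow_mul, hss]
    try rw [h4] at h
    field_simp at h
    linarith
  rw [h']
  field_simp
  rw [hss]
  field_simp
  ring

/-- The hypergeometric kernel of the Wilf–Zeilberger pair that transforms the second series. -/
noncomputable def pairTerm (x k j : ℝ) : ℝ :=
  Real.Gamma (2 * x + 1 / 2 + k) * Real.Gamma (x + 1 / 2 + k) * Real.Gamma (x + 1 / 2 + k + j) *
      Real.Gamma (1 - 2 * x + j) /
    (Real.Gamma (3 / 2 - x + k + j) * Real.Gamma (3 / 2 + k + j) * Real.Gamma (3 / 2 + k))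

theorem pairTerm_rel {x k j : ℝ} (hx1 : -1 / 5 < x) (hx2 : x < 1 / 5) (hk : 0 ≤ k) (hj : 0 ≤ j) :
    pairTerm x k (j + 1) * (1 + x + 2 * k + (j + 1)) - pairTerm x k j * (1 + x + 2 * k + j) =
      -(pairTerm x (k + 1) j * (1 / 2 + (k + 1))) - pairTerm x k j * (1 / 2 + k) := by
  unfold pairTerm
  have e1 : Real.Gamma (2 * x + 1 / 2 + (k + 1)) =
      (2 * x + 1 / 2 + k) * Real.Gamma (2 * x + 1 / 2 + k) := by
    rw [← Real.Gamma_add_one (by linarith)]; congr 1; ring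
  have e2 : Real.Gamma (x + 1 / 2 + (k + 1)) = (x + 1 / 2 + k) * Real.Gamma (x + 1 / 2 + k) := by
    rw [← Real.Gamma_add_one (by linarith)]; congr 1; ring
  have e3 : Real.Gamma (x + 1 / 2 + (k + 1) + j) =
      (x + 1 / 2 + k + j) * Real.Gamma (x + 1 / 2 + k + j) := by
    rw [← Real.Gamma_add_one (by linarith)]; congr 1; ring
  have e3' : Real.Gamma (x + 1 / 2 + k + (j + 1)) =
      (x + 1 / 2 + k + j) * Real.Gamma (x + 1 / 2 + k + j) := by
    rw [← Real.Gamma_add_one (by linarith)]; congr 1; ring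
  have e4 : Real.Gamma (1 - 2 * x + (j + 1)) = (1 - 2 * x + j) * Real.Gamma (1 - 2 * x + j) := by
    rw [← Real.Gamma_add_one (by linarith)]; congr 1; ring
  have e5 : Real.Gamma (3 / 2 - x + (k + 1) + j) =
      (3 / 2 - x + k + j) * Real.Gamma (3 / 2 - x + k + j) := by
    rw [← Real.Gamma_add_one (by linarith)]; congr 1; ring
  have e5' : Real.Gamma (3 / 2 - x + k + (j + 1)) =
      (3 / 2 - x + k + j) * Real.Gamma (3 / 2 - x + k + j) := by
    rw [← Real.Gamma_add_one (by linarith)]; congr 1; ring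
  have e6 : Real.Gamma (3 / 2 + (k + 1) + j) = (3 / 2 + k + j) * Real.Gamma (3 / 2 + k + j) := by
    rw [← Real.Gamma_add_one (by linarith)]; congr 1; ring
  have e6' : Real.Gamma (3 / 2 + k + (j + 1)) = (3 / 2 + k + j) * Real.Gamma (3 / 2 + k + j) := by
    rw [← Real.Gamma_add_one (by linarith)]; congr 1; ring
  have e7 : Real.Gamma (3 / 2 + (k + 1)) = (3 / 2 + k) * Real.Gamma (3 / 2 + k) := by
    rw [← Real.Gamma_add_one (by linarith)]; congr 1; ring
  have g1 := (Real.Gamma_pos_of_pos (show 0 < 3 / 2 - x + k + j by linarith)).ne'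
  have g2 := (Real.Gamma_pos_of_pos (show 0 < 3 / 2 + k + j by linarith)).ne'
  have g3 := (Real.Gamma_pos_of_pos (show 0 < 3 / 2 + k by linarith)).ne'
  rw [e1, e2, e3, e3', e4, e5, e5', e6, e6', e7]
  generalize Real.Gamma (2 * x + 1 / 2 + k) = A, Real.Gamma (x + 1 / 2 + k) = B,
    Real.Gamma (x + 1 / 2 + k + j) = C, Real.Gamma (1 - 2 * x + j) = D,
    Real.Gamma (3 / 2 - x + k + j) = E, Real.Gamma (3 / 2 + k + j) = U,
    Real.Gamma (3 / 2 + k) = V at *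
  have h1 : 3 / 2 - x + k + j ≠ 0 := by linarith
  have h2 : 3 / 2 + k + j ≠ 0 := by linarith
  have h3 : 3 / 2 + k ≠ 0 := by linarith
  have h1' : 3 - x * 2 + 2 * k + 2 * j ≠ 0 := by linarith
  rw [show (1 : ℝ) / 2 + (k + 1) = 3 / 2 + k by ring]
  have key : A * B * ((x + 1 / 2 + k + j) * C) * ((1 - 2 * x + j) * D) /
        ((3 / 2 - x + k + j) * E * ((3 / 2 + k + j) * U) * V) =
      A * B * C * D / (E * U * V) *
        ((x + 1 / 2 + k + j) * (1 - 2 * x + j) / ((3 / 2 - x + k + j) * (3 / 2 + k + j))) := by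
    rw [div_mul_div_comm]; congr 1 <;> ring
  have key2 : (2 * x + 1 / 2 + k) * A * ((x + 1 / 2 + k) * B) * ((x + 1 / 2 + k + j) * C) * D /
        ((3 / 2 - x + k + j) * E * ((3 / 2 + k + j) * U) * ((3 / 2 + k) * V)) =
      A * B * C * D / (E * U * V) *
        ((2 * x + 1 / 2 + k) * (x + 1 / 2 + k) * (x + 1 / 2 + k + j) /
          ((3 / 2 - x + k + j) * (3 / 2 + k + j) * (3 / 2 + k))) := by
    rw [div_mul_div_comm]; congr 1 <;> ring
  rw [key, key2]
  have key3 : (x + 1 / 2 + k + j) * (1 - 2 * x + j) / ((3 / 2 - x + k + j) * (3 / 2 + k + j)) *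
      (1 + x + 2 * k + (j + 1)) - (1 + x + 2 * k + j) =
      -((2 * x + 1 / 2 + k) * (x + 1 / 2 + k) * (x + 1 / 2 + k + j) /
          ((3 / 2 - x + k + j) * (3 / 2 + k + j) * (3 / 2 + k)) * (3 / 2 + k)) - (1 / 2 + k) := by
    field_simp
    ring
  linear_combination A * B * C * D / (E * U * V) * key3

theorem tendsto_pairTerm (x k : ℝ) :
    ∃ L, Tendsto (fun j : ℕ => pairTerm x k j * (j : ℝ) ^ (3 / 2 + k)) atTop (𝓝 L) := by
  have h := (tendsto_mul_rpow_of_mul_rpow (tendsto_Gamma_ratio (x + 1 / 2 + k) (3 / 2 - x + k))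
    (tendsto_Gamma_ratio (1 - 2 * x) (3 / 2 + k))).const_mul (Real.Gamma (2 * x + 1 / 2 + k) *
      Real.Gamma (x + 1 / 2 + k) / Real.Gamma (3 / 2 + k))
  refine ⟨_, h.congr fun j => ?_⟩
  unfold pairTerm
  rw [show 3 / 2 - x + k - (x + 1 / 2 + k) + (3 / 2 + k - (1 - 2 * x)) = 3 / 2 + k by ring,
    add_comm (j : ℝ), add_comm (j : ℝ), add_comm (j : ℝ), add_comm (j : ℝ), ← mul_assoc]
  congr 1
  simp only [div_eq_mul_inv, mul_inv]
  ring

theorem summable_pairTerm (x : ℝ) {k : ℝ} (hk : 0 ≤ k) : Summable (fun j : ℕ => pairTerm x k j) := by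
  obtain ⟨L, hL⟩ := tendsto_pairTerm x k
  exact summable_of_tendsto_mul_rpow (by linarith) hL

theorem tendsto_pairTerm_mul (x : ℝ) {k : ℝ} (hk : 0 ≤ k) :
    Tendsto (fun j : ℕ => pairTerm x k j * (1 + x + 2 * k + j)) atTop (𝓝 0) := by
  obtain ⟨L, hL⟩ := tendsto_pairTerm x k
  have h := tendsto_mul_rpow_of_mul_rpow hL (tendsto_natCast_add_mul_rpow (1 + x + 2 * k))
  refine (tendsto_zero_of_tendsto_mul_rpow (by linarith) h).congr fun j => ?_
  ring

theorem pairTerm_nonneg {x k j : ℝ} (hx1 : -1 / 5 < x) (hx2 : x < 1 / 5) (hk : 0 ≤ k) (hj : 0 ≤ j) :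
    0 ≤ pairTerm x k j := by
  have := Real.Gamma_pos_of_pos (show 0 < 2 * x + 1 / 2 + k by linarith)
  have := Real.Gamma_pos_of_pos (show 0 < x + 1 / 2 + k by linarith)
  have := Real.Gamma_pos_of_pos (show 0 < x + 1 / 2 + k + j by linarith)
  have := Real.Gamma_pos_of_pos (show 0 < 1 - 2 * x + j by linarith)
  have := Real.Gamma_pos_of_pos (show 0 < 3 / 2 - x + k + j by linarith)
  have := Real.Gamma_pos_of_pos (show 0 < 3 / 2 + k + j by linarith)
  have := Real.Gamma_pos_of_pos (show 0 < 3 / 2 + k by linarith)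
  unfold pairTerm
  positivity

theorem tsum_pairTerm_le {x k : ℝ} (hx1 : -1 / 5 < x) (hx2 : x < 1 / 5) (hk : 1 ≤ k) :
    (∑' j : ℕ, pairTerm x k j) * (1 / 2 + k) ≤
      Real.Gamma (1 - 2 * x) * (Real.Gamma (k + (2 * x - 1 / 2)) / Real.Gamma (k + 1 / 2) *
        (Real.Gamma (k + (x + 1 / 2)) / Real.Gamma (k + 1 / 2)) *
        (Real.Gamma (k + (x + 1 / 2)) / Real.Gamma (k + (3 / 2 - x)))) := by
  have p1 := Real.Gamma_pos_of_pos (show 0 < 2 * x + 1 / 2 + k by linarith)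
  have p2 := Real.Gamma_pos_of_pos (show 0 < x + 1 / 2 + k by linarith)
  have p3 := Real.Gamma_pos_of_pos (show 0 < 3 / 2 + k by linarith)
  set c := Real.Gamma (2 * x + 1 / 2 + k) * Real.Gamma (x + 1 / 2 + k) / Real.Gamma (3 / 2 + k) *
    (Real.Gamma (x + 1 / 2 + k) / Real.Gamma (3 / 2 - x + k)) with hc
  have hsum := tsum_Gamma_ratio (a := 1 - 2 * x) (b := 3 / 2 + k) (by linarith) (by linarith)
  have hle : ∀ j : ℕ, pairTerm x k j ≤
      c * (Real.Gamma (1 - 2 * x + j) / Real.Gamma (3 / 2 + k + j)) := by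
    intro j
    have hj : (0 : ℝ) ≤ j := by positivity
    have p4 := Real.Gamma_pos_of_pos (show 0 < 1 - 2 * x + j by linarith)
    have p5 := Real.Gamma_pos_of_pos (show 0 < 3 / 2 + k + j by linarith)
    have := Gamma_ratio_le (a := x + 1 / 2 + k) (b := 3 / 2 - x + k) (by linarith) (by linarith) j
    calc pairTerm x k j = Real.Gamma (2 * x + 1 / 2 + k) * Real.Gamma (x + 1 / 2 + k) /
          Real.Gamma (3 / 2 + k) * (Real.Gamma (x + 1 / 2 + k + j) / Real.Gamma (3 / 2 - x + k + j)) *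
          (Real.Gamma (1 - 2 * x + j) / Real.Gamma (3 / 2 + k + j)) := by
          unfold pairTerm
          simp only [div_eq_mul_inv, mul_inv]
          ring
      _ ≤ _ := by rw [hc]; gcongr
  have h := Summable.tsum_le_tsum hle (summable_pairTerm x (by linarith))
    ((summable_Gamma_ratio (by linarith)).mul_left c)
  rw [tsum_mul_left, hsum] at h
  refine (mul_le_mul_of_nonneg_right h (by linarith)).trans (le_of_eq ?_)
  have e1 : Real.Gamma (2 * x + 1 / 2 + k) =
      (3 / 2 + k - (1 - 2 * x) - 1) * Real.Gamma (k + (2 * x - 1 / 2)) := by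
    rw [show 3 / 2 + k - (1 - 2 * x) - 1 = k + (2 * x - 1 / 2) by ring,
      ← Real.Gamma_add_one (by linarith)]; congr 1; ring
  have e2 : Real.Gamma (3 / 2 + k) = (1 / 2 + k) * Real.Gamma (k + 1 / 2) := by
    rw [add_comm (1 / 2) k, ← Real.Gamma_add_one (by linarith)]; congr 1; ring
  rw [hc, e1, e2, show 3 / 2 + k - 1 = k + 1 / 2 by ring, add_comm (x + 1 / 2),
    add_comm (3 / 2 - x)]
  have q1 := (Real.Gamma_pos_of_pos (show 0 < k + 1 / 2 by linarith)).ne'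
  have q2 := (Real.Gamma_pos_of_pos (show 0 < k + (3 / 2 - x) by linarith)).ne'
  have q3 : 3 / 2 + k - (1 - 2 * x) - 1 ≠ 0 := by linarith
  have q4 : 1 / 2 + k ≠ 0 := by linarith
  generalize Real.Gamma (k + 1 / 2) = A, Real.Gamma (k + (3 / 2 - x)) = B,
    Real.Gamma (k + (x + 1 / 2)) = C, Real.Gamma (k + (2 * x - 1 / 2)) = D,
    Real.Gamma (1 - 2 * x) = E, 3 / 2 + k - (1 - 2 * x) - 1 = U, 1 / 2 + k = V at *
  field_simp

theorem tendsto_tsum_pairTerm {x : ℝ} (hx1 : -1 / 5 < x) (hx2 : x < 1 / 5) :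
    Tendsto (fun K : ℕ => (∑' j : ℕ, pairTerm x K j) * (1 / 2 + K)) atTop (𝓝 0) := by
  have h := tendsto_zero_of_tendsto_mul_rpow (by linarith) (tendsto_mul_rpow_of_mul_rpow
    (tendsto_mul_rpow_of_mul_rpow (tendsto_Gamma_ratio (2 * x - 1 / 2) (1 / 2))
      (tendsto_Gamma_ratio (x + 1 / 2) (1 / 2))) (tendsto_Gamma_ratio (x + 1 / 2) (3 / 2 - x)))
  have h' := h.const_mul (Real.Gamma (1 - 2 * x))
  rw [mul_zero] at h'
  refine tendsto_of_tendsto_of_tendsto_of_le_of_le' tendsto_const_nhds h' ?_ ?_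
  · filter_upwards with K
    have : 0 ≤ ∑' j : ℕ, pairTerm x K j :=
      tsum_nonneg fun j => pairTerm_nonneg hx1 hx2 (by positivity) (by positivity)
    positivity
  · filter_upwards [eventually_ge_atTop 1] with K hK
    exact tsum_pairTerm_le hx1 hx2 (by exact_mod_cast hK)

theorem summable_pairTerm_zero {x : ℝ} (hx2 : x < 1 / 5) :
    Summable (fun k : ℕ => (-1 : ℝ) ^ k * (pairTerm x k 0 * (1 + x + 2 * k))) := by
  have h := tendsto_mul_rpow_of_mul_rpow (tendsto_mul_rpow_of_mul_rpow
    (tendsto_mul_rpow_of_mul_rpow (tendsto_Gamma_ratio (2 * x + 1 / 2) (3 / 2))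
      (tendsto_Gamma_ratio (x + 1 / 2) (3 / 2))) (tendsto_Gamma_ratio (x + 1 / 2) (3 / 2 - x)))
    (tendsto_natCast_add_mul_rpow ((1 + x) / 2))
  have hs := (summable_of_tendsto_mul_rpow (by linarith) h).mul_left (2 * Real.Gamma (1 - 2 * x))
  refine Summable.of_norm (hs.norm.congr fun k => ?_)
  rw [norm_mul ((-1 : ℝ) ^ k), norm_pow, norm_neg, norm_one, one_pow, one_mul]
  congr 1
  unfold pairTerm
  simp only [add_zero]
  rw [add_comm (2 * x + 1 / 2), add_comm (x + 1 / 2), add_comm (3 / 2 - x), add_comm (3 / 2 : ℝ)]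
  simp only [div_eq_mul_inv, mul_inv]
  ring

theorem tsum_pairTerm_zero {x : ℝ} (hx1 : -1 / 5 < x) (hx2 : x < 1 / 5) :
    ∑' k : ℕ, (-1 : ℝ) ^ k * (pairTerm x k 0 * (1 + x + 2 * k)) =
      1 / 2 * ∑' j : ℕ, pairTerm x 0 j := by
  have hlim : Tendsto (fun K : ℕ => ∑' j : ℕ, (-1 : ℝ) ^ K * (pairTerm x K j * (1 / 2 + K)))
      atTop (𝓝 0) := by
    refine squeeze_zero_norm (fun K => le_of_eq ?_) (tendsto_tsum_pairTerm hx1 hx2)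
    have : 0 ≤ ∑' j : ℕ, pairTerm x K j :=
      tsum_nonneg fun j => pairTerm_nonneg hx1 hx2 (by positivity) (by positivity)
    rw [tsum_mul_left, tsum_mul_right, norm_mul, norm_pow, norm_neg, norm_one, one_pow, one_mul,
      Real.norm_of_nonneg (by positivity)]
  have h := tendsto_sum_of_wz
    (F := fun k j : ℕ => (-1 : ℝ) ^ k * (pairTerm x k j * (1 + x + 2 * k + j)))
    (H := fun k j : ℕ => (-1 : ℝ) ^ k * (pairTerm x k j * (1 / 2 + k))) (L := 0)
    (fun k j => by
      have := pairTerm_rel hx1 hx2 (k.cast_nonneg (α := ℝ)) (j.cast_nonneg (α := ℝ))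
      push_cast
      rw [pow_succ]
      linear_combination (-1 : ℝ) ^ k * this)
    (fun k => by
      simpa using (tendsto_pairTerm_mul x (k.cast_nonneg (α := ℝ))).const_mul ((-1 : ℝ) ^ k))
    (fun k => ((summable_pairTerm x (k.cast_nonneg (α := ℝ))).mul_right _).mul_left _)
    hlim
  have h2 := (summable_pairTerm_zero hx2).hasSum.tendsto_sum_nat
  simp only [Nat.cast_zero, add_zero, sub_zero, pow_zero, one_mul] at h
  rw [tendsto_nhds_unique h2 h, tsum_mul_right, mul_comm]

/-- The summand of the unilateral series to which the second series is equivalent. -/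
noncomputable def altTerm (x j : ℝ) : ℝ :=
  Real.Gamma (x + 1 / 2 + j) * Real.Gamma (1 - 2 * x + j) /
    (Real.Gamma (3 / 2 - x + j) * Real.Gamma (3 / 2 + j))

/-- The normalising factor of the series of `altTerm`. -/
noncomputable def altWeight (x : ℝ) : ℝ :=
  16 * Real.sin (Real.pi * x) * Real.Gamma (x + 1 / 2) * Real.Gamma (2 * x + 1 / 2) /
    (Real.pi * √Real.pi * Real.Gamma x * Real.Gamma (2 * x))

/-- The telescoping certificate of the series of `altTerm`. -/
noncomputable def altCert (x j : ℝ) : ℝ :=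
  altWeight x * (Real.Gamma (x + 1 / 2 + j) * Real.Gamma (-1 - 2 * x + j) /
    (Real.Gamma (1 / 2 - x + j) * Real.Gamma (1 / 2 + j))) *
    ((20 * x + 3) * (1 + 2 * x) / (16 * x ^ 2) - (16 * x + 3) / (8 * x ^ 2) * j)

theorem altWeight_add_one {x : ℝ} (hx1 : -1 / 5 < x) (hx0 : x ≠ 0) :
    altWeight (x + 1) = -(altWeight x * ((2 * x + 1 / 2) * (2 * x + 3 / 2) / (4 * x ^ 2))) := by
  unfold altWeight
  have e1 : Real.Gamma (2 * (x + 1) + 1 / 2) =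
      (2 * x + 3 / 2) * ((2 * x + 1 / 2) * Real.Gamma (2 * x + 1 / 2)) := by
    rw [← Real.Gamma_add_one (by linarith), ← show 2 * x + 3 / 2 = 2 * x + 1 / 2 + 1 by ring,
      ← Real.Gamma_add_one (by linarith)]
    congr 1; ring
  have e2 : Real.Gamma (x + 1 + 1 / 2) = (x + 1 / 2) * Real.Gamma (x + 1 / 2) := by
    rw [← Real.Gamma_add_one (by linarith)]; congr 1; ring
  have hx2 : 2 * x ≠ 0 := mul_ne_zero two_ne_zero hx0
  have e3 : Real.Gamma (2 * (x + 1)) = (2 * x + 1) * (2 * x * Real.Gamma (2 * x)) := by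
    rw [← Real.Gamma_add_one hx2, ← Real.Gamma_add_one (by linarith)]
    congr 1; ring
  have e4 : Real.sin (Real.pi * (x + 1)) = -Real.sin (Real.pi * x) := by
    rw [mul_add, mul_one, Real.sin_add_pi]
  rw [e1, e2, e3, e4, Real.Gamma_add_one hx0]
  have h1 : 2 * x + 1 ≠ 0 := by linarith
  generalize Real.Gamma (2 * x + 1 / 2) = A, Real.Gamma (x + 1 / 2) = B, Real.Gamma x = C,
    Real.Gamma (2 * x) = D, Real.sin (Real.pi * x) = S, Real.pi * √Real.pi = P
  calc _ = -(16 * S * B * A / (P * C * D) *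
        ((x + 1 / 2) * (2 * x + 3 / 2) * (2 * x + 1 / 2) / (x * (2 * x + 1) * (2 * x)))) := by
        rw [div_mul_div_comm, ← neg_div]; congr 1 <;> ring
    _ = _ := by
        congr 2
        rw [div_eq_div_iff (mul_ne_zero (mul_ne_zero hx0 h1) hx2) (by positivity)]
        ring

theorem altTerm_add {x j : ℝ} (hx1 : -1 / 5 < x) (hx2 : x < 1 / 5) (hj : 0 ≤ j) (hx0 : x ≠ 0)
    (h0 : j - 2 * x ≠ 0) (h1 : j - 1 - 2 * x ≠ 0) :
    altWeight x * altTerm x j + altWeight (x + 1) * altTerm (x + 1) j =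
      altCert x j - altCert x (j + 1) := by
  rw [altWeight_add_one hx1 hx0]
  unfold altCert altTerm
  have e1 : Real.Gamma (x + 1 + 1 / 2 + j) = (x + 1 / 2 + j) * Real.Gamma (x + 1 / 2 + j) := by
    rw [← Real.Gamma_add_one (by linarith)]; congr 1; ring
  have e1' : Real.Gamma (x + 1 / 2 + (j + 1)) = (x + 1 / 2 + j) * Real.Gamma (x + 1 / 2 + j) := by
    rw [← Real.Gamma_add_one (by linarith)]; congr 1; ring
  have e2' : Real.Gamma (-1 - 2 * x + (j + 1)) =
      (j - 1 - 2 * x) * Real.Gamma (-1 - 2 * x + j) := by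
    rw [show -1 - 2 * x + j = j - 1 - 2 * x by ring, ← Real.Gamma_add_one h1]; congr 1; ring
  have e2 : Real.Gamma (1 - 2 * x + j) =
      (j - 2 * x) * ((j - 1 - 2 * x) * Real.Gamma (-1 - 2 * x + j)) := by
    rw [← e2', show -1 - 2 * x + (j + 1) = j - 2 * x by ring, ← Real.Gamma_add_one h0]
    congr 1; ring
  have e3 : Real.Gamma (3 / 2 - x + j) = (1 / 2 - x + j) * Real.Gamma (1 / 2 - x + j) := by
    rw [← Real.Gamma_add_one (by linarith)]; congr 1; ring
  have e3' : Real.Gamma (1 / 2 - x + (j + 1)) = (1 / 2 - x + j) * Real.Gamma (1 / 2 - x + j) := by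
    rw [← Real.Gamma_add_one (by linarith)]; congr 1; ring
  have e4 : Real.Gamma (3 / 2 + j) = (1 / 2 + j) * Real.Gamma (1 / 2 + j) := by
    rw [← Real.Gamma_add_one (by linarith)]; congr 1; ring
  have e4' : Real.Gamma (1 / 2 + (j + 1)) = (1 / 2 + j) * Real.Gamma (1 / 2 + j) := by
    rw [← Real.Gamma_add_one (by linarith)]; congr 1; ring
  rw [e1, e1', e2, e2', e3, e3', e4, e4', show 1 - 2 * (x + 1) + j = -1 - 2 * x + j by ring,
    show 3 / 2 - (x + 1) + j = 1 / 2 - x + j by ring]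
  have g3 := (Real.Gamma_pos_of_pos (show 0 < 1 / 2 - x + j by linarith)).ne'
  have g4 := (Real.Gamma_pos_of_pos (show 0 < 1 / 2 + j by linarith)).ne'
  generalize Real.Gamma (x + 1 / 2 + j) = A, Real.Gamma (-1 - 2 * x + j) = B,
    Real.Gamma (1 / 2 - x + j) = C, Real.Gamma (1 / 2 + j) = D, altWeight x = W at *
  have h3 : 1 / 2 - x + j ≠ 0 := by linarith
  have h4 : 1 / 2 + j ≠ 0 := by linarith
  have key : (j - 2 * x) * (j - 1 - 2 * x) / ((1 / 2 - x + j) * (1 / 2 + j)) -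
      (2 * x + 1 / 2) * (2 * x + 3 / 2) / (4 * x ^ 2) * ((x + 1 / 2 + j) / (1 / 2 + j)) =
      ((20 * x + 3) * (1 + 2 * x) / (16 * x ^ 2) - (16 * x + 3) / (8 * x ^ 2) * j) -
      (x + 1 / 2 + j) * (j - 1 - 2 * x) / ((1 / 2 - x + j) * (1 / 2 + j)) *
      ((20 * x + 3) * (1 + 2 * x) / (16 * x ^ 2) - (16 * x + 3) / (8 * x ^ 2) * (j + 1)) := by
    obtain ⟨u, hu⟩ : ∃ u, u = 1 / 2 - x + j := ⟨_, rfl⟩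
    obtain ⟨v, hv⟩ : ∃ v, v = 1 / 2 + j := ⟨_, rfl⟩
    rw [← hu] at h3
    rw [← hv] at h4
    rw [← hu, ← hv]
    field_simp
    rw [hu, hv]
    ring
  have i1 : A * ((j - 2 * x) * ((j - 1 - 2 * x) * B)) / ((1 / 2 - x + j) * C * ((1 / 2 + j) * D)) =
      A * B / (C * D) * ((j - 2 * x) * (j - 1 - 2 * x) / ((1 / 2 - x + j) * (1 / 2 + j))) := by
    rw [div_mul_div_comm]; congr 1 <;> ring
  have i2 : (x + 1 / 2 + j) * A * B / (C * ((1 / 2 + j) * D)) =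
      A * B / (C * D) * ((x + 1 / 2 + j) / (1 / 2 + j)) := by
    rw [div_mul_div_comm]; congr 1 <;> ring
  have i3 : (x + 1 / 2 + j) * A * ((j - 1 - 2 * x) * B) / ((1 / 2 - x + j) * C * ((1 / 2 + j) * D)) =
      A * B / (C * D) * ((x + 1 / 2 + j) * (j - 1 - 2 * x) / ((1 / 2 - x + j) * (1 / 2 + j))) := by
    rw [div_mul_div_comm]; congr 1 <;> ring
  rw [i1, i2, i3]
  linear_combination W * (A * B / (C * D)) * key

theorem altCert_zero {x : ℝ} (hx1 : -1 / 5 < x) (hx2 : x < 1 / 5) (hx0 : x ≠ 0) :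
    altCert x 0 = baseTerm x * (20 * x + 3) := by
  have hpi := Real.pi_pos
  have hs : Real.sin (Real.pi * x) ≠ 0 := by
    rcases lt_or_gt_of_ne hx0 with h | h
    · exact (Real.sin_neg_of_neg_of_neg_pi_lt (by nlinarith) (by nlinarith)).ne
    · exact (Real.sin_pos_of_pos_of_lt_pi (by positivity) (by nlinarith)).ne'
  have hc : Real.cos (Real.pi * x) ≠ 0 :=
    (Real.cos_pos_of_mem_Ioo ⟨by nlinarith, by nlinarith⟩).ne'
  have hx2' : 2 * x ≠ 0 := mul_ne_zero two_ne_zero hx0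
  have h21 : 2 * x + 1 ≠ 0 := by linarith
  have e1 : (Real.Gamma (1 / 2 - x))⁻¹ =
      Real.Gamma (x + 1 / 2) * Real.cos (Real.pi * x) / Real.pi := by
    rw [inv_Gamma_eq_sin (by linarith), show 1 - (1 / 2 - x) = x + 1 / 2 by ring,
      show Real.pi * (1 / 2 - x) = Real.pi / 2 - Real.pi * x by ring, Real.sin_pi_div_two_sub]
  have e2 : Real.Gamma (-1 - 2 * x) = Real.pi / (2 * Real.sin (Real.pi * x) *
      Real.cos (Real.pi * x) * ((2 * x + 1) * (2 * x * Real.Gamma (2 * x)))) := by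
    rw [← Real.Gamma_add_one hx2', ← Real.Gamma_add_one h21]
    have := Real.Gamma_mul_Gamma_one_sub (2 * x + 1 + 1)
    rw [show 1 - (2 * x + 1 + 1) = -1 - 2 * x by ring,
      show Real.pi * (2 * x + 1 + 1) = 2 * (Real.pi * x) + 2 * Real.pi by ring,
      Real.sin_add_two_pi, Real.sin_two_mul] at this
    have g := (Real.Gamma_pos_of_pos (show 0 < 2 * x + 1 + 1 by linarith)).ne'
    generalize Real.Gamma (2 * x + 1 + 1) = A at *
    generalize Real.Gamma (-1 - 2 * x) = B at *
    field_simp at this ⊢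
    linarith
  have hss : √Real.pi ^ 2 = Real.pi := Real.sq_sqrt Real.pi_pos.le
  have hsq : √Real.pi ≠ 0 := (Real.sqrt_pos.2 Real.pi_pos).ne'
  have g1 : Real.Gamma (2 * x) ≠ 0 := by
    intro h
    have := Real.Gamma_add_one hx2'
    rw [h, mul_zero] at this
    exact (Real.Gamma_pos_of_pos (show 0 < 2 * x + 1 by linarith)).ne' this
  have g2 : Real.Gamma x ≠ 0 := by
    intro h
    have := Real.Gamma_add_one hx0
    rw [h, mul_zero] at this
    exact (Real.Gamma_pos_of_pos (show 0 < x + 1 by linarith)).ne' this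
  unfold altCert altWeight baseTerm
  simp only [add_zero, mul_zero, sub_zero]
  rw [div_eq_mul_inv (Real.Gamma (x + 1 / 2) * _), mul_inv, e1, e2, Real.Gamma_one_half_eq,
    Real.Gamma_add_one hx0, Real.Gamma_add_one hx2']
  generalize Real.Gamma (2 * x + 1 / 2) = A, Real.Gamma (x + 1 / 2) = B, Real.Gamma x = C,
    Real.Gamma (2 * x) = D, Real.sin (Real.pi * x) = S, Real.cos (Real.pi * x) = T at *
  field_simp
  rw [hss]
  field_simp
  ring

theorem tendsto_altCert (x : ℝ) : Tendsto (fun j : ℕ => altCert x j) atTop (𝓝 0) := by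
  have h1 := tendsto_mul_rpow_of_mul_rpow (tendsto_Gamma_ratio (x + 1 / 2) (1 / 2 - x))
    (tendsto_Gamma_ratio (-1 - 2 * x) (1 / 2))
  have h2 := tendsto_zero_of_tendsto_mul_rpow (by linarith) h1
  have h3 := tendsto_zero_of_tendsto_mul_rpow (by linarith)
    (tendsto_mul_rpow_of_mul_rpow h1 (tendsto_natCast_add_mul_rpow 0))
  have h4 := ((h2.const_mul ((20 * x + 3) * (1 + 2 * x) / (16 * x ^ 2))).sub
    (h3.const_mul ((16 * x + 3) / (8 * x ^ 2)))).const_mul (altWeight x)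
  simp only [mul_zero, sub_zero] at h4
  refine h4.congr fun j => ?_
  unfold altCert
  rw [add_comm (j : ℝ) (x + 1 / 2), add_comm (j : ℝ) (-1 - 2 * x), add_comm (j : ℝ) (1 / 2 - x),
    add_comm (j : ℝ) (1 / 2), mul_div_mul_comm]
  ring

theorem summable_altTerm (x : ℝ) : Summable (fun j : ℕ => altTerm x j) := by
  have h1 := tendsto_mul_rpow_of_mul_rpow (tendsto_Gamma_ratio (x + 1 / 2) (3 / 2 - x))
    (tendsto_Gamma_ratio (1 - 2 * x) (3 / 2))
  refine (summable_of_tendsto_mul_rpow (by linarith) h1).congr fun j => ?_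
  unfold altTerm
  rw [add_comm (j : ℝ), add_comm (j : ℝ), add_comm (j : ℝ), add_comm (j : ℝ), mul_div_mul_comm]

theorem altWeight_mul_tsum_add {x : ℝ} (hx1 : -1 / 5 < x) (hx2 : x < 1 / 5) (hx0 : x ≠ 0) :
    altWeight x * ∑' j : ℕ, altTerm x j + altWeight (x + 1) * ∑' j : ℕ, altTerm (x + 1) j =
      baseTerm x * (20 * x + 3) := by
  have s1 := (summable_altTerm x).mul_left (altWeight x)
  have s2 := (summable_altTerm (x + 1)).mul_left (altWeight (x + 1))
  rw [← tsum_mul_left, ← tsum_mul_left, ← s1.tsum_add s2, ← altCert_zero hx1 hx2 hx0]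
  have key : ∀ j : ℤ, (j : ℝ) ≠ 2 * x := by
    intro j hj
    have h1 : (-1 : ℝ) < j := by linarith
    have h2 : (j : ℝ) < 1 := by linarith
    have h1' : -1 < j := by exact_mod_cast h1
    have h2' : j < 1 := by exact_mod_cast h2
    have : j = 0 := by omega
    subst this
    apply hx0
    push_cast at hj
    linarith
  have h := tsum_eq_of_telescoping (s1.add s2) (G := fun j : ℕ => altCert x j) (fun j => ?_)
    (tendsto_altCert x)
  · simpa using h
  · push_cast
    refine altTerm_add hx1 hx2 j.cast_nonneg hx0 (fun h => key j ?_) (fun h => key (j - 1) ?_)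
    · push_cast; linarith
    · push_cast; linarith

/-- Gauss's summation formula for `₂F₁(1/2, a; c; 1)`. -/
theorem tsum_gauss_half {a c : ℝ} (ha : 0 < a) (hc : a + 1 < c)
    (hs : Real.sin (Real.pi * a) ≠ 0) :
    ∑' r : ℕ, Real.Gamma (1 / 2 + r) / Real.Gamma (1 + r) *
        (Real.Gamma (a + r) / Real.Gamma (c + r)) =
      √Real.pi * Real.Gamma a * Real.Gamma (c - a - 1 / 2) /
        (Real.Gamma (c - 1 / 2) * Real.Gamma (c - a)) := by
  have hpi := Real.pi_pos.ne'
  have h := hasSum_bilateral (α₁ := 1 - a) (β₁ := c) (α₂ := 1 / 2) (β₂ := 1)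
    (by linarith) (by norm_num)
  have h1 : ∀ r : ℕ, (Real.Gamma (1 - a - (r : ℤ)))⁻¹ * (Real.Gamma (c + (r : ℤ)))⁻¹ *
      (Real.Gamma (1 / 2 - (r : ℤ)))⁻¹ * (Real.Gamma (1 + (r : ℤ)))⁻¹ =
      Real.sin (Real.pi * a) / Real.pi ^ 2 * (Real.Gamma (1 / 2 + r) / Real.Gamma (1 + r) *
        (Real.Gamma (a + r) / Real.Gamma (c + r))) := by
    intro r
    have hr : (0 : ℝ) ≤ r := by positivity
    push_cast
    rw [inv_Gamma_eq_sin (z := 1 - a - r) (by linarith),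
      inv_Gamma_eq_sin (z := 1 / 2 - r) (by linarith)]
    have s1 : Real.sin (Real.pi * (1 - a - r)) = (-1) ^ r * Real.sin (Real.pi * a) := by
      rw [show Real.pi * (1 - a - r) = (Real.pi - Real.pi * a) - r * Real.pi by ring,
        Real.sin_sub_nat_mul_pi, Real.sin_pi_sub]
    have s2 : Real.sin (Real.pi * (1 / 2 - r)) = (-1) ^ r := by
      rw [show Real.pi * (1 / 2 - r) = Real.pi / 2 - r * Real.pi by ring,
        Real.sin_sub_nat_mul_pi, Real.sin_pi_div_two, mul_one]
    have s3 : ((-1 : ℝ) ^ r) * (-1) ^ r = 1 := by rw [← mul_pow]; norm_num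
    rw [s1, s2, show 1 - (1 - a - r) = a + r by ring,
      show (1 : ℝ) - (1 / 2 - r) = 1 / 2 + r by ring]
    simp only [div_eq_mul_inv]
    linear_combination Real.Gamma (a + r) * Real.sin (Real.pi * a) * Real.pi⁻¹ *
      (Real.Gamma (c + r))⁻¹ * Real.Gamma (1 * 2⁻¹ + r) * Real.pi⁻¹ *
      (Real.Gamma (1 + r))⁻¹ * s3
  have h2 : ∀ r : ℕ, (Real.Gamma (1 - a - ((-((r : ℤ) + 1) : ℤ) : ℝ)))⁻¹ *
      (Real.Gamma (c + ((-((r : ℤ) + 1) : ℤ) : ℝ)))⁻¹ *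
      (Real.Gamma (1 / 2 - ((-((r : ℤ) + 1) : ℤ) : ℝ)))⁻¹ *
      (Real.Gamma (1 + ((-((r : ℤ) + 1) : ℤ) : ℝ)))⁻¹ = 0 := by
    intro r
    push_cast
    rw [show 1 + -((r : ℝ) + 1) = -r by ring, Real.Gamma_neg_nat_eq_zero, inv_zero, mul_zero]
  have h3 := h.tsum_nat_add_tsum_neg h1 h2
  rw [tsum_zero, add_zero, tsum_mul_left, show 1 - a + c + 1 / 2 + 1 - 3 = c - a - 1 / 2 by ring,
    show 1 - a + c - 1 = c - a by ring, show 1 - a + 1 - 1 = 1 - a by ring,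
    show 1 / 2 + c - 1 = c - 1 / 2 by ring, show (1 / 2 : ℝ) + 1 - 1 = 1 / 2 by ring,
    inv_Gamma_eq_sin (z := 1 - a) (by linarith), sub_sub_cancel,
    show Real.pi * (1 - a) = Real.pi - Real.pi * a by ring, Real.sin_pi_sub,
    Real.Gamma_one_half_eq] at h3
  have hss : √Real.pi ^ 2 = Real.pi := Real.sq_sqrt Real.pi_pos.le
  have hsq : √Real.pi ≠ 0 := (Real.sqrt_pos.2 Real.pi_pos).ne'
  have g1 := (Real.Gamma_pos_of_pos (show 0 < c - a by linarith)).ne'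
  have g2 := (Real.Gamma_pos_of_pos (show 0 < c - 1 / 2 by linarith)).ne'
  generalize (∑' r : ℕ, Real.Gamma (1 / 2 + r) / Real.Gamma (1 + r) *
        (Real.Gamma (a + r) / Real.Gamma (c + r))) = T at *
  generalize Real.Gamma (c - a) = A, Real.Gamma (c - 1 / 2) = B, Real.Gamma a = C,
    Real.Gamma (c - a - 1 / 2) = D, Real.sin (Real.pi * a) = S at *
  field_simp at h3 ⊢
  refine mul_right_cancel₀ hsq ?_
  linear_combination h3 - D * C * hss

/-- A Toeplitz-type comparison: asymptotically equivalent sequences have the same limit of weighted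
sums when each individual weight tends to zero. -/
theorem tendsto_tsum_mul_of_isLittleO {w : ℕ → ℕ → ℝ} {u v : ℕ → ℝ} {M : ℝ}
    (hw0 : ∀ᶠ N in atTop, ∀ r, 0 ≤ w N r) (hw : ∀ r, Tendsto (fun N => w N r) atTop (𝓝 0))
    (hv : ∀ r, 0 ≤ v r) (hsum : ∀ᶠ N in atTop, Summable fun r => w N r * v r)
    (hlim : Tendsto (fun N => ∑' r, w N r * v r) atTop (𝓝 M))
    (huv : (fun r => u r - v r) =o[atTop] v) :
    Tendsto (fun N => ∑' r, w N r * u r) atTop (𝓝 M) := by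
  have bound : ∀ c : ℝ, 0 < c → ∃ R : ℕ, ∀ᶠ N in atTop,
      Summable (fun r => w N r * (u r - v r)) ∧
      ‖∑' r, w N r * (u r - v r)‖ ≤
        ∑ r ∈ Finset.range R, w N r * |u r - v r| + c * ∑' r, w N r * v r := by
    intro c hc
    obtain ⟨R, hR⟩ := eventually_atTop.1 (huv.bound hc)
    refine ⟨R, ?_⟩
    filter_upwards [hw0, hsum] with N h0 hs
    set g : ℕ → ℝ := fun r => if r ∈ Finset.range R then w N r * |u r - v r| else 0 with hg
    have hg1 : HasSum g (∑ r ∈ Finset.range R, w N r * |u r - v r|) := by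
      have := hasSum_sum_of_ne_finset_zero (L := SummationFilter.unconditional ℕ) (f := g)
        (s := Finset.range R) fun r hr => by simp only [hg, if_neg hr]
      rwa [Finset.sum_congr rfl (g := fun r => w N r * |u r - v r|)
        fun r hr => by simp only [hg, if_pos hr]] at this
    have hb := hg1.add (hs.hasSum.mul_left c)
    have hle : ∀ r, ‖w N r * (u r - v r)‖ ≤ g r + c * (w N r * v r) := by
      intro r
      have hwv := mul_nonneg (h0 r) (hv r)
      rw [norm_mul, Real.norm_of_nonneg (h0 r), Real.norm_eq_abs]
      by_cases hr : r < R
      · simp only [hg, Finset.mem_range, hr, if_true]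
        nlinarith
      · simp only [hg, Finset.mem_range, hr, if_false, zero_add]
        have := hR r (not_lt.1 hr)
        rw [Real.norm_eq_abs, Real.norm_of_nonneg (hv r)] at this
        nlinarith [mul_le_mul_of_nonneg_left this (h0 r)]
    exact ⟨Summable.of_norm_bounded hb.summable hle, tsum_of_norm_bounded hb hle⟩
  have hzero : Tendsto (fun N => ∑' r, w N r * (u r - v r)) atTop (𝓝 0) := by
    rw [Metric.tendsto_nhds]
    intro ε hε
    set c := ε / (2 * (|M| + 1)) with hcdef
    have hM : 0 < |M| + 1 := by positivity
    have hc : 0 < c := by positivity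
    obtain ⟨R, hR⟩ := bound c hc
    have hfin : Tendsto (fun N => ∑ r ∈ Finset.range R, w N r * |u r - v r|) atTop (𝓝 0) := by
      simpa using tendsto_finsetSum (Finset.range R) fun r _ => (hw r).mul_const |u r - v r|
    have hMlt : M < |M| + 1 := by linarith [le_abs_self M]
    filter_upwards [hR, hfin.eventually_lt_const (half_pos hε), hlim.eventually_lt_const hMlt]
      with N h1 h2 h3
    rw [dist_zero_right]
    refine h1.2.trans_lt ?_
    have : c * ∑' r, w N r * v r ≤ c * (|M| + 1) := mul_le_mul_of_nonneg_left h3.le hc.le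
    have hcM : c * (|M| + 1) = ε / 2 := by rw [hcdef]; field_simp
    linarith
  obtain ⟨R, hR⟩ := bound 1 one_pos
  have := hzero.add hlim
  rw [zero_add] at this
  refine this.congr' ?_
  filter_upwards [hR, hsum] with N h1 h2
  rw [← h1.1.tsum_add h2]
  exact tsum_congr fun r => by ring

theorem isLittleO_sub_Gamma_ratio {a b c d : ℝ} (h : b - a = d - c) (hc : 0 < c) (hd : 0 < d) :
    (fun r : ℕ => Real.Gamma (a + r) / Real.Gamma (b + r) -
        Real.Gamma (c + r) / Real.Gamma (d + r)) =o[atTop]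
      fun r : ℕ => Real.Gamma (c + r) / Real.Gamma (d + r) := by
  have h1 := (tendsto_Gamma_ratio a b).div (tendsto_Gamma_ratio c d) one_ne_zero
  rw [div_one, h] at h1
  have hpos : ∀ r : ℕ, Real.Gamma (c + r) / Real.Gamma (d + r) ≠ 0 := fun r =>
    (div_pos (Real.Gamma_pos_of_pos (by positivity)) (Real.Gamma_pos_of_pos (by positivity))).ne'
  have := (Asymptotics.isEquivalent_iff_tendsto_one (l := atTop)
    (u := fun r : ℕ => Real.Gamma (a + r) / Real.Gamma (b + r))
    (v := fun r : ℕ => Real.Gamma (c + r) / Real.Gamma (d + r))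
    (Eventually.of_forall hpos)).2 ?_
  · exact this.isLittleO
  · refine h1.congr' ?_
    filter_upwards [eventually_gt_atTop 0] with n hn
    have hn' : (0 : ℝ) < n := by exact_mod_cast hn
    have h2 := (Real.rpow_pos_of_pos hn' (d - c)).ne'
    simp only [Pi.div_apply]
    rw [add_comm (n : ℝ), add_comm (n : ℝ), add_comm (n : ℝ), add_comm (n : ℝ),
      mul_div_mul_right _ _ h2]

/-- The first component of the closed form relating `altTerm` and `reflTerm`. -/
noncomputable def swapF (y s r : ℝ) : ℝ :=
  Real.Gamma (y + 1 / 2 + s) * Real.Gamma (1 - 2 * y + s + r) * Real.Gamma (1 - y + r) /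
    (Real.Gamma (1 / 2 - y + r) * Real.Gamma (3 / 2 - y + s) * Real.Gamma (3 / 2 + s + r))

/-- The second component of the closed form relating `altTerm` and `reflTerm`. -/
noncomputable def swapH (y s r : ℝ) : ℝ :=
  -(Real.Gamma (y + 1 / 2 + s) * Real.Gamma (1 - 2 * y + s + r) * Real.Gamma (1 - y + r) /
    (Real.Gamma (3 / 2 - y + r) * Real.Gamma (1 / 2 - y + s) * Real.Gamma (3 / 2 + s + r)))

theorem swap_rel {y s r : ℝ} (hy : 1 / 2 < y) (hs : 0 ≤ s) (hr : 0 ≤ r)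
    (h1 : 1 - 2 * y + s + r ≠ 0) (h2 : 1 - y + r ≠ 0) (h3 : 1 / 2 - y + r ≠ 0)
    (h4 : 1 / 2 - y + s ≠ 0) :
    swapF y s (r + 1) - swapF y s r = swapH y (s + 1) r - swapH y s r := by
  unfold swapF swapH
  have e1 : Real.Gamma (y + 1 / 2 + (s + 1)) = (y + 1 / 2 + s) * Real.Gamma (y + 1 / 2 + s) := by
    rw [← Real.Gamma_add_one (by linarith)]; congr 1; ring
  have e2 : Real.Gamma (1 - 2 * y + (s + 1) + r) =
      (1 - 2 * y + s + r) * Real.Gamma (1 - 2 * y + s + r) := by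
    rw [← Real.Gamma_add_one h1]; congr 1; ring
  have e2' : Real.Gamma (1 - 2 * y + s + (r + 1)) =
      (1 - 2 * y + s + r) * Real.Gamma (1 - 2 * y + s + r) := by
    rw [← Real.Gamma_add_one h1]; congr 1; ring
  have e3 : Real.Gamma (1 - y + (r + 1)) = (1 - y + r) * Real.Gamma (1 - y + r) := by
    rw [← Real.Gamma_add_one h2]; congr 1; ring
  have e4 : Real.Gamma (1 / 2 - y + (r + 1)) = (1 / 2 - y + r) * Real.Gamma (1 / 2 - y + r) := by
    rw [← Real.Gamma_add_one h3]; congr 1; ring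
  have e4' : Real.Gamma (3 / 2 - y + r) = (1 / 2 - y + r) * Real.Gamma (1 / 2 - y + r) := by
    rw [← Real.Gamma_add_one h3]; congr 1; ring
  have e5 : Real.Gamma (1 / 2 - y + (s + 1)) = (1 / 2 - y + s) * Real.Gamma (1 / 2 - y + s) := by
    rw [← Real.Gamma_add_one h4]; congr 1; ring
  have e5' : Real.Gamma (3 / 2 - y + s) = (1 / 2 - y + s) * Real.Gamma (1 / 2 - y + s) := by
    rw [← Real.Gamma_add_one h4]; congr 1; ring
  have e6 : Real.Gamma (3 / 2 + (s + 1) + r) = (3 / 2 + s + r) * Real.Gamma (3 / 2 + s + r) := by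
    rw [← Real.Gamma_add_one (by linarith)]; congr 1; ring
  have e6' : Real.Gamma (3 / 2 + s + (r + 1)) = (3 / 2 + s + r) * Real.Gamma (3 / 2 + s + r) := by
    rw [← Real.Gamma_add_one (by linarith)]; congr 1; ring
  have h5 : 3 / 2 + s + r ≠ 0 := by linarith
  rw [e1, e2, e2', e3, e4, e4', e5, e5', e6, e6']
  generalize Real.Gamma (y + 1 / 2 + s) = A, Real.Gamma (1 - 2 * y + s + r) = B,
    Real.Gamma (1 - y + r) = C, Real.Gamma (3 / 2 + s + r) = D, Real.Gamma (1 / 2 - y + r) = E,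
    Real.Gamma (1 / 2 - y + s) = F
  obtain ⟨a, ha⟩ : ∃ a, a = 1 / 2 - y + r := ⟨_, rfl⟩
  obtain ⟨b, hb⟩ : ∃ b, b = 1 / 2 - y + s := ⟨_, rfl⟩
  obtain ⟨c, hc⟩ : ∃ c, c = 3 / 2 + s + r := ⟨_, rfl⟩
  have hab : 1 - 2 * y + s + r = a + b := by rw [ha, hb]; ring
  have hcab : y + 1 / 2 + s = c - (1 - y + r) := by rw [hc]; ring
  rw [← ha] at h3
  rw [← hb] at h4
  rw [← hc] at h5
  rw [← ha, ← hb, ← hc, hab, hcab]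
  generalize 1 - y + r = d
  have i1 : A * ((a + b) * B) * (d * C) / (a * E * (b * F) * (c * D)) =
      A * B * C / (E * F * D) * ((a + b) * d / (a * b * c)) := by
    rw [div_mul_div_comm]; congr 1 <;> ring
  have i2 : A * B * C / (E * (b * F) * D) = A * B * C / (E * F * D) * (1 / b) := by
    rw [div_mul_div_comm]; congr 1 <;> ring
  have i3 : (c - d) * A * ((a + b) * B) * C / (a * E * (b * F) * (c * D)) =
      A * B * C / (E * F * D) * ((c - d) * (a + b) / (a * b * c)) := by
    rw [div_mul_div_comm]; congr 1 <;> ring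
  have i4 : A * B * C / (a * E * F * D) = A * B * C / (E * F * D) * (1 / a) := by
    rw [div_mul_div_comm]; congr 1 <;> ring
  have key : (a + b) * d / (a * b * c) - 1 / b = -((c - d) * (a + b) / (a * b * c)) + 1 / a := by
    field_simp
    ring
  rw [i1, i2, i3, i4]
  linear_combination A * B * C / (E * F * D) * key

theorem tendsto_swapF {y : ℝ} (hy : 0 < y) (s : ℝ) :
    Tendsto (fun r : ℕ => swapF y s r) atTop (𝓝 0) := by
  have h := tendsto_zero_of_tendsto_mul_rpow (by linarith) (tendsto_mul_rpow_of_mul_rpow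
    (tendsto_Gamma_ratio (1 - 2 * y + s) (3 / 2 + s)) (tendsto_Gamma_ratio (1 - y) (1 / 2 - y)))
  have h' := h.const_mul (Real.Gamma (y + 1 / 2 + s) / Real.Gamma (3 / 2 - y + s))
  rw [mul_zero] at h'
  refine h'.congr fun r => ?_
  unfold swapF
  rw [add_comm (r : ℝ), add_comm (r : ℝ), add_comm (r : ℝ), add_comm (r : ℝ)]
  simp only [div_eq_mul_inv, mul_inv]
  ring

theorem summable_swapH {y : ℝ} (hy : 0 < y) (s : ℝ) : Summable (fun r : ℕ => swapH y s r) := by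
  have h := summable_of_tendsto_mul_rpow (by linarith) (tendsto_mul_rpow_of_mul_rpow
    (tendsto_Gamma_ratio (1 - 2 * y + s) (3 / 2 + s)) (tendsto_Gamma_ratio (1 - y) (3 / 2 - y)))
  refine (h.mul_left (-(Real.Gamma (y + 1 / 2 + s) / Real.Gamma (1 / 2 - y + s)))).congr fun r => ?_
  unfold swapH
  rw [add_comm (r : ℝ), add_comm (r : ℝ), add_comm (r : ℝ), add_comm (r : ℝ)]
  simp only [div_eq_mul_inv, mul_inv]
  ring

theorem tendsto_tsum_swapH {y : ℝ} (hy1 : 1 / 2 < y) (hy2 : y < 6 / 5)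
    (hnint : ∀ m : ℤ, 2 * y ≠ m) :
    Tendsto (fun N : ℕ => ∑' r : ℕ, swapH y N r) atTop
      (𝓝 (-(√Real.pi * Real.Gamma (2 * y) / Real.Gamma (2 * y + 1 / 2)))) := by
  set w : ℕ → ℕ → ℝ := fun N r => Real.Gamma (y + 1 / 2 + N) / Real.Gamma (1 / 2 - y + N) *
    (Real.Gamma (1 - 2 * y + N + r) / Real.Gamma (3 / 2 + N + r)) with hw
  set v : ℕ → ℝ := fun r => Real.Gamma (1 / 2 + r) / Real.Gamma (1 + r) with hv
  have hsin : ∀ N : ℕ, Real.sin (Real.pi * (1 - 2 * y + N)) ≠ 0 := by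
    intro N h
    obtain ⟨m, hm⟩ := Real.sin_eq_zero_iff.1 h
    rw [mul_comm] at hm
    have := mul_left_cancel₀ Real.pi_pos.ne' hm
    refine hnint (1 + N - m) ?_
    push_cast
    linarith
  have hval : ∀ᶠ N : ℕ in atTop, ∑' r, w N r * v r =
      √Real.pi * Real.Gamma (2 * y) / Real.Gamma (2 * y + 1 / 2) *
        (Real.Gamma (N + (y + 1 / 2)) / Real.Gamma (N + (1 / 2 - y)) *
          (Real.Gamma (N + (1 - 2 * y)) / Real.Gamma (N + 1))) := by
    filter_upwards [eventually_ge_atTop 2] with N hN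
    have hN' : (2 : ℝ) ≤ N := by exact_mod_cast hN
    have h := tsum_gauss_half (a := 1 - 2 * y + N) (c := 3 / 2 + N) (by linarith) (by linarith)
      (hsin N)
    rw [show 3 / 2 + (N : ℝ) - (1 - 2 * y + N) - 1 / 2 = 2 * y by ring,
      show 3 / 2 + (N : ℝ) - (1 - 2 * y + N) = 2 * y + 1 / 2 by ring,
      show 3 / 2 + (N : ℝ) - 1 / 2 = N + 1 by ring] at h
    rw [show (fun r => w N r * v r) = fun r : ℕ => Real.Gamma (y + 1 / 2 + N) /
      Real.Gamma (1 / 2 - y + N) * (Real.Gamma (1 / 2 + r) / Real.Gamma (1 + r) *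
        (Real.Gamma (1 - 2 * y + N + r) / Real.Gamma (3 / 2 + N + r))) from
      funext fun r => by simp only [hw, hv]; ring, tsum_mul_left, h, add_comm (N : ℝ) (y + 1 / 2),
      add_comm (N : ℝ) (1 / 2 - y), add_comm (N : ℝ) (1 - 2 * y)]
    simp only [div_eq_mul_inv, mul_inv]
    ring
  have hlim : Tendsto (fun N : ℕ => ∑' r, w N r * v r) atTop
      (𝓝 (√Real.pi * Real.Gamma (2 * y) / Real.Gamma (2 * y + 1 / 2))) := by
    have h := (tendsto_mul_rpow_of_mul_rpow (tendsto_Gamma_ratio (y + 1 / 2) (1 / 2 - y))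
      (tendsto_Gamma_ratio (1 - 2 * y) 1)).const_mul
        (√Real.pi * Real.Gamma (2 * y) / Real.Gamma (2 * y + 1 / 2))
    rw [mul_one, mul_one] at h
    refine h.congr' ?_
    filter_upwards [hval] with N hN
    rw [hN, show 1 / 2 - y - (y + 1 / 2) + (1 - (1 - 2 * y)) = 0 by ring, Real.rpow_zero, mul_one]
  have hmain := tendsto_tsum_mul_of_isLittleO (w := w) (v := v)
    (u := fun r : ℕ => Real.Gamma (1 - y + r) / Real.Gamma (3 / 2 - y + r)) ?_ ?_ ?_ ?_ hlim
    (isLittleO_sub_Gamma_ratio (by ring) (by norm_num) one_pos)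
  · refine hmain.neg.congr fun N => ?_
    rw [← tsum_neg]
    refine tsum_congr fun r => ?_
    simp only [hw, swapH, div_eq_mul_inv, mul_inv]
    ring
  · filter_upwards [eventually_ge_atTop 2] with N hN r
    have hN' : (2 : ℝ) ≤ N := by exact_mod_cast hN
    have hr : (0 : ℝ) ≤ r := by positivity
    have := Real.Gamma_pos_of_pos (show 0 < y + 1 / 2 + N by linarith)
    have := Real.Gamma_pos_of_pos (show 0 < 1 / 2 - y + N by linarith)
    have := Real.Gamma_pos_of_pos (show 0 < 1 - 2 * y + N + r by linarith)
    have := Real.Gamma_pos_of_pos (show 0 < 3 / 2 + (N : ℝ) + r by linarith)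
    simp only [hw]
    positivity
  · intro r
    refine (tendsto_zero_of_tendsto_mul_rpow (by linarith) (tendsto_mul_rpow_of_mul_rpow
      (tendsto_Gamma_ratio (y + 1 / 2) (1 / 2 - y))
      (tendsto_Gamma_ratio (1 - 2 * y + r) (3 / 2 + r)))).congr fun N => ?_
    simp only [hw]
    rw [add_comm (N : ℝ) (y + 1 / 2), add_comm (N : ℝ) (1 / 2 - y),
      show (N : ℝ) + (1 - 2 * y + r) = 1 - 2 * y + N + r by ring,
      show (N : ℝ) + (3 / 2 + r) = 3 / 2 + N + r by ring]
  · intro r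
    exact (div_pos (Real.Gamma_pos_of_pos (by positivity))
      (Real.Gamma_pos_of_pos (by positivity))).le
  · filter_upwards with N
    have h := summable_of_tendsto_mul_rpow (by linarith) (tendsto_mul_rpow_of_mul_rpow
      (tendsto_Gamma_ratio (1 - 2 * y + N) (3 / 2 + N)) (tendsto_Gamma_ratio (1 / 2) 1))
    refine (h.mul_left (Real.Gamma (y + 1 / 2 + N) / Real.Gamma (1 / 2 - y + N))).congr fun r => ?_
    simp only [hw, hv]
    rw [add_comm (r : ℝ), add_comm (r : ℝ), add_comm (r : ℝ), add_comm (r : ℝ), mul_assoc]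

theorem tsum_altTerm_swap {y : ℝ} (hy1 : 1 / 2 < y) (hy2 : y < 6 / 5) (hnint : ∀ m : ℤ, 2 * y ≠ m) :
    Real.Gamma (1 - y) / Real.Gamma (1 / 2 - y) * ∑' s : ℕ, altTerm y s =
      √Real.pi * Real.Gamma (2 * y) / Real.Gamma (2 * y + 1 / 2) -
        Real.Gamma (y + 1 / 2) / Real.Gamma (1 / 2 - y) * ∑' r : ℕ, reflTerm y r := by
  have h := tendsto_sum_of_wz (F := fun s r : ℕ => swapF y s r) (H := fun s r : ℕ => swapH y s r)
    (fun s r => by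
      push_cast
      refine swap_rel hy1 s.cast_nonneg r.cast_nonneg (fun h => hnint (1 + s + r) ?_)
        (fun h => hnint (2 * (1 + r)) ?_) (fun h => hnint (1 + 2 * r) ?_)
        (fun h => hnint (1 + 2 * s) ?_) <;> push_cast <;> linarith)
    (fun s => tendsto_swapF (by linarith) s) (fun s => summable_swapH (by linarith) s)
    (tendsto_tsum_swapH hy1 hy2 hnint)
  have e1 : ∀ s : ℕ, swapF y s ((0 : ℕ) : ℝ) =
      Real.Gamma (1 - y) / Real.Gamma (1 / 2 - y) * altTerm y s := by
    intro s
    simp only [swapF, altTerm, Nat.cast_zero, add_zero, div_eq_mul_inv, mul_inv]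
    ring
  have e2 : ∀ r : ℕ, swapH y ((0 : ℕ) : ℝ) r =
      -(Real.Gamma (y + 1 / 2) / Real.Gamma (1 / 2 - y)) * reflTerm y r := by
    intro r
    simp only [swapH, reflTerm, Nat.cast_zero, add_zero, div_eq_mul_inv, mul_inv]
    ring
  simp only [e1, e2] at h
  have h2 := ((summable_altTerm y).mul_left
    (Real.Gamma (1 - y) / Real.Gamma (1 / 2 - y))).hasSum.tendsto_sum_nat
  rw [← tsum_mul_left, tendsto_nhds_unique h2 h, tsum_mul_left]
  ring

theorem altWeight_mul_tsum {y : ℝ} (hy1 : 1 / 2 < y) (hy2 : y < 6 / 5)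
    (hnint : ∀ m : ℤ, 2 * y ≠ m) (hcos : Real.cos (Real.pi * y) ≠ 0) :
    altWeight y * ∑' s : ℕ, altTerm y s =
      16 * Real.sin (Real.pi * y) ^ 2 / (Real.pi * Real.cos (Real.pi * y)) -
        wzWeight y * (2 * Real.sin (Real.pi * y) ^ 2 * ∑' r : ℕ, reflTerm y r) := by
  have h := tsum_altTerm_swap hy1 hy2 hnint
  have hpi := Real.pi_pos.ne'
  have hsq : √Real.pi ≠ 0 := (Real.sqrt_pos.2 Real.pi_pos).ne'
  have e1 : (Real.Gamma (1 / 2 - y))⁻¹ =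
      Real.Gamma (y + 1 / 2) * Real.cos (Real.pi * y) / Real.pi := by
    rw [inv_Gamma_eq_sin (by linarith), show 1 - (1 / 2 - y) = y + 1 / 2 by ring,
      show Real.pi * (1 / 2 - y) = Real.pi / 2 - Real.pi * y by ring, Real.sin_pi_div_two_sub]
  have g0 : Real.Gamma (1 - y) ≠ 0 :=
    Real.Gamma_ne_zero fun m hm => hnint (2 * (m + 1)) (by push_cast; linarith)
  have e2 := inv_Gamma_eq_sin_of_ne g0
  have g1 := (Real.Gamma_pos_of_pos (show 0 < 2 * y by linarith)).ne'
  have g2 := (Real.Gamma_pos_of_pos (show 0 < y + 1 / 2 by linarith)).ne'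
  have g4 := (Real.Gamma_pos_of_pos (show 0 < 2 * y + 1 / 2 by linarith)).ne'
  rw [div_eq_mul_inv, div_eq_mul_inv (Real.Gamma (y + 1 / 2)), e1] at h
  have hW : altWeight y = 16 * Real.sin (Real.pi * y) * Real.Gamma (y + 1 / 2) *
      Real.Gamma (2 * y + 1 / 2) / (Real.pi * √Real.pi * Real.Gamma (2 * y)) *
      (Real.Gamma y)⁻¹ := by
    unfold altWeight
    simp only [div_eq_mul_inv, mul_inv]
    ring
  rw [hW, e2]
  unfold wzWeight
  generalize (∑' s : ℕ, altTerm y s) = T at *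
  generalize (∑' r : ℕ, reflTerm y r) = R at *
  generalize Real.Gamma (2 * y + 1 / 2) = A, Real.Gamma (y + 1 / 2) = B,
    Real.Gamma (2 * y) = D, Real.sin (Real.pi * y) = S, Real.cos (Real.pi * y) = C,
    Real.Gamma (1 - y) = E at *
  have hk : 16 * S * B * A / (Real.pi * √Real.pi * D) * (E * S / Real.pi) * T =
      16 * S ^ 2 * A / (Real.pi * √Real.pi * D * C) * (E * (B * C / Real.pi) * T) := by
    field_simp
  rw [hk, h]
  field_simp
  ring

theorem pochR_eq_Gamma_div {a : ℝ} (ha : 0 < a) (n : ℕ) :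
    pochR a n = Real.Gamma (a + n) / Real.Gamma a := by
  have g := (Real.Gamma_pos_of_pos ha).ne'
  induction n with
  | zero => simp [pochR, g]
  | succ n ih =>
    unfold pochR at ih ⊢
    rw [Finset.prod_range_succ, ih]
    push_cast
    rw [← add_assoc, Real.Gamma_add_one (by positivity)]
    ring

theorem firstTerm_eq {t : ℝ} (ht : -1 / 2 < t) (n : ℕ) :
    (-1 : ℝ) ^ n * (2 : ℝ) ^ (-(2 : ℝ) * t) *
        (pochG (1/2) t * pochG (1/4) t * pochG (3/4) t / pochG 1 t ^ 3) * (20 * t + 3) =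
      (-1 : ℝ) ^ n * (baseTerm t * (20 * t + 3)) := by
  rw [← baseTerm_eq ht]
  unfold pochG
  ring

theorem tsum_baseTerm_eq_sub {x : ℝ} (hx : -1 / 2 < x) :
    ∑' n : ℕ, (-1 : ℝ) ^ n * (baseTerm (n + x) * (20 * (n + x) + 3)) =
      baseTerm x * (20 * x + 3) -
        ∑' n : ℕ, (-1 : ℝ) ^ n * (baseTerm (n + (x + 1)) * (20 * (n + (x + 1)) + 3)) := by
  rw [(summable_baseTerm hx).tsum_eq_zero_add, sub_eq_add_neg, ← tsum_neg]
  congr 1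
  · simp
  · refine tsum_congr fun n => ?_
    push_cast
    rw [show (n : ℝ) + 1 + x = n + (x + 1) by ring, pow_succ]
    ring

theorem pairTerm_zero_eq {x : ℝ} (hx1 : -1 / 5 < x) (hx2 : x < 1 / 5) (n : ℕ) :
    (-1 : ℝ) ^ n * (pairTerm x n 0 * (1 + x + 2 * n)) =
      4 * Real.Gamma (2 * x + 1 / 2) * Real.Gamma (x + 1 / 2) ^ 2 * Real.Gamma (1 - 2 * x) /
          (Real.pi * Real.Gamma (3 / 2 - x)) *
        ((-1 : ℝ) ^ n *
          (pochR (1/2 + 2*x) n * pochR (1/2 + x) n ^ 2 / (pochR (3/2 - x) n * pochR (1/2) n ^ 2)) *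
          ((2 * (n : ℝ) + 1 + x) / (2 * (n : ℝ) + 1) ^ 2)) := by
  have hn : (0 : ℝ) ≤ n := n.cast_nonneg
  rw [pochR_eq_Gamma_div (by linarith), pochR_eq_Gamma_div (by linarith),
    pochR_eq_Gamma_div (by linarith), pochR_eq_Gamma_div (by norm_num), Real.Gamma_one_half_eq]
  unfold pairTerm
  have e : Real.Gamma (3 / 2 + n) = (1 / 2 + n) * Real.Gamma (1 / 2 + n) := by
    rw [← Real.Gamma_add_one (by linarith)]; congr 1; ring
  simp only [add_zero]
  rw [e, add_comm (1 / 2) (2 * x), add_comm (1 / 2) x]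
  have hpi := Real.pi_pos.ne'
  have hsq : √Real.pi ≠ 0 := (Real.sqrt_pos.2 Real.pi_pos).ne'
  have hss : √Real.pi ^ 2 = Real.pi := Real.sq_sqrt Real.pi_pos.le
  have g1 := (Real.Gamma_pos_of_pos (show 0 < 2 * x + 1 / 2 by linarith)).ne'
  have g2 := (Real.Gamma_pos_of_pos (show 0 < x + 1 / 2 by linarith)).ne'
  have g3 := (Real.Gamma_pos_of_pos (show 0 < 3 / 2 - x by linarith)).ne'
  have g4 := (Real.Gamma_pos_of_pos (show 0 < 3 / 2 - x + n by linarith)).ne'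
  have g5 := (Real.Gamma_pos_of_pos (show 0 < 1 / 2 + (n : ℝ) by linarith)).ne'
  generalize Real.Gamma (2 * x + 1 / 2 + n) = A, Real.Gamma (x + 1 / 2 + n) = B,
    Real.Gamma (3 / 2 - x + n) = C, Real.Gamma (1 / 2 + (n : ℝ)) = D,
    Real.Gamma (2 * x + 1 / 2) = A', Real.Gamma (x + 1 / 2) = B', Real.Gamma (3 / 2 - x) = C',
    Real.Gamma (1 - 2 * x) = E at *
  have h : 2 * (n : ℝ) + 1 ≠ 0 := by linarith
  rw [show (1 : ℝ) / 2 + n = (2 * n + 1) / 2 by ring]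
  field_simp
  rw [hss]
  field_simp
  ring

theorem tsum_altTerm_eq {x : ℝ} (hx1 : -1 / 5 < x) (hx2 : x < 1 / 5) :
    ∑' j : ℕ, altTerm x j =
      4 * Real.Gamma (x + 1 / 2) * Real.Gamma (1 - 2 * x) / (√Real.pi * Real.Gamma (3 / 2 - x)) *
        ∑' n : ℕ, (-1 : ℝ) ^ n *
          (pochR (1/2 + 2*x) n * pochR (1/2 + x) n ^ 2 / (pochR (3/2 - x) n * pochR (1/2) n ^ 2)) *
          ((2 * (n : ℝ) + 1 + x) / (2 * (n : ℝ) + 1) ^ 2) := by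
  have h := tsum_pairTerm_zero hx1 hx2
  simp only [pairTerm_zero_eq hx1 hx2, tsum_mul_left] at h
  have hpi := Real.pi_pos.ne'
  have hsq : √Real.pi ≠ 0 := (Real.sqrt_pos.2 Real.pi_pos).ne'
  have hss : √Real.pi ^ 2 = Real.pi := Real.sq_sqrt Real.pi_pos.le
  have e : Real.Gamma (3 / 2) = √Real.pi / 2 := by
    rw [show (3 / 2 : ℝ) = 1 / 2 + 1 by norm_num, Real.Gamma_add_one (by norm_num),
      Real.Gamma_one_half_eq]; ring
  have h2 : ∀ j : ℕ, pairTerm x 0 j = 2 * Real.Gamma (2 * x + 1 / 2) * Real.Gamma (x + 1 / 2) /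
      √Real.pi * altTerm x j := by
    intro j
    unfold pairTerm altTerm
    simp only [add_zero]
    rw [e]
    simp only [div_eq_mul_inv, mul_inv, inv_inv]
    ring
  simp only [h2, tsum_mul_left] at h
  have g1 := (Real.Gamma_pos_of_pos (show 0 < 2 * x + 1 / 2 by linarith)).ne'
  have g2 := (Real.Gamma_pos_of_pos (show 0 < x + 1 / 2 by linarith)).ne'
  have g3 := (Real.Gamma_pos_of_pos (show 0 < 3 / 2 - x by linarith)).ne'
  generalize (∑' j : ℕ, altTerm x j) = S at *
  generalize (∑' n : ℕ, (-1 : ℝ) ^ n *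
          (pochR (1/2 + 2*x) n * pochR (1/2 + x) n ^ 2 / (pochR (3/2 - x) n * pochR (1/2) n ^ 2)) *
          ((2 * (n : ℝ) + 1 + x) / (2 * (n : ℝ) + 1) ^ 2)) = T at *
  generalize Real.Gamma (2 * x + 1 / 2) = A', Real.Gamma (x + 1 / 2) = B',
    Real.Gamma (3 / 2 - x) = C', Real.Gamma (1 - 2 * x) = E at *
  field_simp at h ⊢
  refine mul_left_cancel₀ hsq ?_
  linear_combination (-1 : ℝ) * h + S * C' * hss

theorem altWeight_eq {x : ℝ} (hx1 : -1 / 5 < x) (hx2 : x < 1 / 5) (hx0 : x ≠ 0) :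
    altWeight x * (4 * Real.Gamma (x + 1 / 2) * Real.Gamma (1 - 2 * x) /
        (√Real.pi * Real.Gamma (3 / 2 - x))) = 8 * (baseTerm x * (32 * x ^ 3 / (1 - 2 * x))) := by
  have hpi := Real.pi_pos
  have hs : Real.sin (Real.pi * x) ≠ 0 := by
    rcases lt_or_gt_of_ne hx0 with h | h
    · exact (Real.sin_neg_of_neg_of_neg_pi_lt (by nlinarith) (by nlinarith)).ne
    · exact (Real.sin_pos_of_pos_of_lt_pi (by positivity) (by nlinarith)).ne'
  have hc : Real.cos (Real.pi * x) ≠ 0 :=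
    (Real.cos_pos_of_mem_Ioo ⟨by nlinarith, by nlinarith⟩).ne'
  have hx2' : 2 * x ≠ 0 := mul_ne_zero two_ne_zero hx0
  have h21 : 1 - 2 * x ≠ 0 := by linarith
  have e1 : (Real.Gamma (3 / 2 - x))⁻¹ =
      2 * (Real.Gamma (x + 1 / 2) * Real.cos (Real.pi * x) / Real.pi) / (1 - 2 * x) := by
    rw [show 3 / 2 - x = 1 / 2 - x + 1 by ring, Real.Gamma_add_one (by linarith), mul_inv,
      inv_Gamma_eq_sin (by linarith), show 1 - (1 / 2 - x) = x + 1 / 2 by ring,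
      show Real.pi * (1 / 2 - x) = Real.pi / 2 - Real.pi * x by ring, Real.sin_pi_div_two_sub,
      show 1 / 2 - x = (1 - 2 * x) / 2 by ring, inv_div]
    ring
  have g1 : Real.Gamma (2 * x) ≠ 0 := by
    intro h
    have := Real.Gamma_add_one hx2'
    rw [h, mul_zero] at this
    exact (Real.Gamma_pos_of_pos (show 0 < 2 * x + 1 by linarith)).ne' this
  have g2 : Real.Gamma x ≠ 0 := by
    intro h
    have := Real.Gamma_add_one hx0
    rw [h, mul_zero] at this
    exact (Real.Gamma_pos_of_pos (show 0 < x + 1 by linarith)).ne' this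
  have e2 : Real.Gamma (1 - 2 * x) = Real.pi / (2 * Real.sin (Real.pi * x) *
      Real.cos (Real.pi * x) * Real.Gamma (2 * x)) := by
    have := Real.Gamma_mul_Gamma_one_sub (2 * x)
    rw [show Real.pi * (2 * x) = 2 * (Real.pi * x) by ring, Real.sin_two_mul] at this
    generalize Real.Gamma (2 * x) = A at *
    generalize Real.Gamma (1 - 2 * x) = B at *
    field_simp at this ⊢
    linarith
  have hss : √Real.pi ^ 2 = Real.pi := Real.sq_sqrt Real.pi_pos.le
  have hsq : √Real.pi ≠ 0 := (Real.sqrt_pos.2 Real.pi_pos).ne'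
  rw [div_eq_mul_inv (4 * _ * _), mul_inv, e1, e2]
  unfold altWeight baseTerm
  rw [Real.Gamma_add_one hx0, Real.Gamma_add_one hx2']
  generalize Real.Gamma (2 * x + 1 / 2) = A, Real.Gamma (x + 1 / 2) = B, Real.Gamma x = C,
    Real.Gamma (2 * x) = D, Real.sin (Real.pi * x) = S, Real.cos (Real.pi * x) = T at *
  generalize 1 - 2 * x = U at *
  field_simp
  rw [hss]
  field_simp
  ring

theorem tsum_baseTerm_sub_altWeight {x : ℝ} (hx1 : -1 / 5 < x) (hx2 : x < 1 / 5) (hx0 : x ≠ 0) :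
    ∑' n : ℕ, (-1 : ℝ) ^ n * (baseTerm (n + x) * (20 * (n + x) + 3)) -
        altWeight x * ∑' j : ℕ, altTerm x j =
      8 * Real.cos (2 * Real.pi * x) / (Real.pi * Real.cos (Real.pi * x)) := by
  have hpi := Real.pi_pos
  have hnint : ∀ m : ℤ, 2 * (x + 1) ≠ m := by
    intro m hm
    have h1 : (1 : ℝ) < m := by linarith
    have h2 : (m : ℝ) < 3 := by linarith
    have h1' : 1 < m := by exact_mod_cast h1
    have h2' : m < 3 := by exact_mod_cast h2
    obtain rfl : m = 2 := by omega
    push_cast at hm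
    exact hx0 (by linarith)
  have hc : Real.cos (Real.pi * x) ≠ 0 :=
    (Real.cos_pos_of_mem_Ioo ⟨by nlinarith, by nlinarith⟩).ne'
  have ec : Real.cos (Real.pi * (x + 1)) = -Real.cos (Real.pi * x) := by
    rw [mul_add, mul_one, Real.cos_add_pi]
  have es : Real.sin (Real.pi * (x + 1)) = -Real.sin (Real.pi * x) := by
    rw [mul_add, mul_one, Real.sin_add_pi]
  have hc' : Real.cos (Real.pi * (x + 1)) ≠ 0 := by rw [ec]; exact neg_ne_zero.2 hc
  have k1 := wzWeight_mul_tsum (y := x + 1) (by linarith) hnint hc'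
  have k2 := altWeight_mul_tsum (y := x + 1) (by linarith) (by linarith) hnint hc'
  have k3 := altWeight_mul_tsum_add hx1 hx2 hx0
  rw [tsum_baseTerm_eq_sub (by linarith), tsum_baseTerm_eq (by linarith), ← k3, k1, k2, ec, es,
    mul_assoc 2 Real.pi x, Real.cos_two_mul, Real.cos_sq']
  field_simp
  ring

theorem tsum_baseTerm_zero :
    ∑' n : ℕ, (-1 : ℝ) ^ n * (baseTerm (n + 0) * (20 * (n + 0) + 3)) = 8 / Real.pi := by
  rw [tsum_baseTerm_eq_sub (by norm_num), zero_add, tsum_baseTerm_eq (by norm_num),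
    wzWeight_one_mul_tsum]
  have : baseTerm 0 = 1 := by
    have hpi := Real.pi_pos.ne'
    unfold baseTerm
    simp only [mul_zero, zero_add, Real.Gamma_one, Real.Gamma_one_half_eq]
    rw [show √Real.pi ^ 3 * √Real.pi = (√Real.pi ^ 2) ^ 2 by ring, Real.sq_sqrt Real.pi_pos.le]
    field_simp
  rw [this]
  ring

/-- **Identity 3.** For `-1/5 < x < 1/5`,
`(1/8) ∑_{n≥0} (-1)^n 2^{-2(n+x)} (1/2)_{n+x}(1/4)_{n+x}(3/4)_{n+x}/(1)_{n+x}³ (20(n+x)+3)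
 = (1/π) cos 2πx / cos πx + 4^{-x} (1/2)_x(1/4)_x(3/4)_x/(1)_x³ · 32x³/(1-2x) ·
   ∑_{n≥0} (-1)^n (1/2+2x)_n (1/2+x)_n² / ((3/2-x)_n (1/2)_n²) · (2n+1+x)/(2n+1)²`. -/
theorem identity3 (x : ℝ) (hx1 : -1/5 < x) (hx2 : x < 1/5) :
    Summable (fun n : ℕ =>
      (-1 : ℝ) ^ n * (2 : ℝ) ^ (-(2 : ℝ) * ((n : ℝ) + x)) *
        (pochG (1/2) ((n : ℝ) + x) * pochG (1/4) ((n : ℝ) + x) * pochG (3/4) ((n : ℝ) + x) /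
          pochG 1 ((n : ℝ) + x) ^ 3) *
        (20 * ((n : ℝ) + x) + 3)) ∧
    Summable (fun n : ℕ =>
      (-1 : ℝ) ^ n *
        (pochR (1/2 + 2*x) n * pochR (1/2 + x) n ^ 2 /
          (pochR (3/2 - x) n * pochR (1/2) n ^ 2)) *
        ((2 * (n : ℝ) + 1 + x) / (2 * (n : ℝ) + 1) ^ 2)) ∧
    (1/8 : ℝ) * (∑' n : ℕ,
        (-1 : ℝ) ^ n * (2 : ℝ) ^ (-(2 : ℝ) * ((n : ℝ) + x)) *
          (pochG (1/2) ((n : ℝ) + x) * pochG (1/4) ((n : ℝ) + x) * pochG (3/4) ((n : ℝ) + x) /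
            pochG 1 ((n : ℝ) + x) ^ 3) *
          (20 * ((n : ℝ) + x) + 3))
      = (1 / Real.pi) * (Real.cos (2 * Real.pi * x) / Real.cos (Real.pi * x)) +
        (4 : ℝ) ^ (-x) *
          (pochG (1/2) x * pochG (1/4) x * pochG (3/4) x / pochG 1 x ^ 3) *
          (32 * x ^ 3 / (1 - 2 * x)) *
          ∑' n : ℕ,
            (-1 : ℝ) ^ n *
              (pochR (1/2 + 2*x) n * pochR (1/2 + x) n ^ 2 /
                (pochR (3/2 - x) n * pochR (1/2) n ^ 2)) *
              ((2 * (n : ℝ) + 1 + x) / (2 * (n : ℝ) + 1) ^ 2) := by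
  have hpi := Real.pi_pos
  have hfirst : ∀ n : ℕ, (-1 : ℝ) ^ n * (2 : ℝ) ^ (-(2 : ℝ) * ((n : ℝ) + x)) *
        (pochG (1/2) ((n : ℝ) + x) * pochG (1/4) ((n : ℝ) + x) * pochG (3/4) ((n : ℝ) + x) /
          pochG 1 ((n : ℝ) + x) ^ 3) * (20 * ((n : ℝ) + x) + 3) =
      (-1 : ℝ) ^ n * (baseTerm (n + x) * (20 * (n + x) + 3)) := fun n =>
    firstTerm_eq (by have : (0 : ℝ) ≤ n := n.cast_nonneg; linarith) n
  have hbase : (4 : ℝ) ^ (-x) * (pochG (1/2) x * pochG (1/4) x * pochG (3/4) x / pochG 1 x ^ 3) =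
      baseTerm x := by
    rw [← baseTerm_eq (by linarith), show (4 : ℝ) = 2 ^ (2 : ℝ) by norm_num,
      ← Real.rpow_mul two_pos.le, show (2 : ℝ) * -x = -2 * x by ring]
    rfl
  simp only [hfirst]
  refine ⟨summable_baseTerm (by linarith), ?_, ?_⟩
  · have h := summable_pairTerm_zero hx2
    simp only [pairTerm_zero_eq hx1 hx2] at h
    refine (summable_mul_left_iff ?_).1 h
    have g1 := Real.Gamma_pos_of_pos (show 0 < 2 * x + 1 / 2 by linarith)
    have g2 := Real.Gamma_pos_of_pos (show 0 < x + 1 / 2 by linarith)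
    have g3 := Real.Gamma_pos_of_pos (show 0 < 3 / 2 - x by linarith)
    have g4 := Real.Gamma_pos_of_pos (show 0 < 1 - 2 * x by linarith)
    positivity
  · rw [hbase]
    by_cases hx0 : x = 0
    · subst hx0
      rw [tsum_baseTerm_zero]
      simp
      ring
    · have h := tsum_baseTerm_sub_altWeight hx1 hx2 hx0
      rw [tsum_altTerm_eq hx1 hx2, ← mul_assoc, altWeight_eq hx1 hx2 hx0] at h
      rw [sub_eq_iff_eq_add.1 h]
      have hc : Real.cos (Real.pi * x) ≠ 0 :=
        (Real.cos_pos_of_mem_Ioo ⟨by nlinarith, by nlinarith⟩).ne'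
      rw [mul_add, mul_assoc 8, ← mul_assoc (1 / 8 : ℝ) 8]
      congr 1
      · field_simp
      · norm_num
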